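/- Let τ ∈ σ2. A cubic monotone 3-CNF φ has a one-in-three model if and only if the union U^{σ2}_φ has both the τ-SSP and the τ-ESSP, and equivalently if and only if the joining A(U^{σ2}_φ) is τ-feasible (has both the τ-SSP and the τ-ESSP). -/

import Mathlib

/-!
A region of a union of chains is a signature for which every chain admits a consistent support, and
the supports of different gadgets can be chosen independently. `solvable` decides whether a chain of
interactions admits a support subject to a side condition, so once the shape of a gadget and the
interactions on its edges are known, everything about it is a finite computation. The gadgets come
in eight shapes (`Kind`, `pat`), which reduces statements about all gadgets to finite checks.

*From a region to a model* (`model_of_region`). Suppose `k` is inhibited at `h_{0,2}`. Then `k` is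
defined at one value `K` only, so all `k`-edges have support `K` at both ends. The gadgets `H_j` force
`m` and then every `v_j` to be `swap`; `F_0` does the same for `q_0` and `q_1`; `F_1` and `F_2` then
force `z` to be `nop` or `swap`, whence by `G_j` and `D_l` no `w_j` and no `a_l` is `swap`. The chain
`T_{i,0}` therefore starts with support `K`, and must have support `!K` before its `v_{4i}`-edge; the
support can only change at a variable event that maps both values to `K`. By `T_{i,1}`, `T_{i,2}`,
`T_{i,3}` no two variables of a clause are of this kind, so the variables of this kind form a
one-in-three model.

*From a model to separation.* Most pairs (event, state) are handled by a signature with a single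
`used` and a single `swap` event (`inhib_ns`), and an event foreign to a gadget is inhibited there by
the support vanishing on the gadget (`inhib_foreign`). The remaining pairs (`leftover`) are covered by
a short list of special signatures; only those at which `k` meets `h_{j,2}`, `f_{0,2}`, `f_{0,5}` and
`t_{i,0,14}` need the model (`modelSig`). This gives the ESSP of the union (`uessp_of_model`). A
region that inhibits an event at a state separates it from all states where the event occurs, so the
SSP follows from the ESSP but for a few pairs of states with the same events (`ussp_of_uessp`).

*The joining.* Regions of the joining are regions of the union plus compatible data on the connectors
(`joining_region`). Explicit families of such regions transfer SSP and ESSP from the union to the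
joining (`joining_ssp`, `joining_essp`); inhibiting `⊕_i` inside the `i`-th component uses that the
initial states are the support of a region (`init_region`). Conversely a region of the joining
restricts to the union, so `model_of_region` applies to it as well (`model_of_joining`).
-/

namespace PetriNets

/-- The eight boolean interactions. -/
inductive Interaction : Type
  | nop | inp | out | set | res | swap | used | free
  deriving DecidableEq

/-- The partial function on `{0,1}` (encoded as `Bool`) denoted by an interaction. -/
def Interaction.apply : Interaction → Bool → Option Bool
  | .nop, x => some x
  | .inp, x => if x then some false else none
  | .out, x => if x then none else some true
  | .set, _ => some true
  | .res, _ => some false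
  | .swap, x => some (!x)
  | .used, x => if x then some true else none
  | .free, x => if x then none else some false

/-- A transition system with states `S`, events `E`, a partial transition
function and an initial state. -/
structure TS (S E : Type) where
  delta : S → E → Option S
  init : S

/-- A `τ`-region of a transition system. -/
structure Region (τ : Set Interaction) {S E : Type} (A : TS S E) where
  sup : S → Bool
  sig : E → Interaction
  sig_mem : ∀ e : E, sig e ∈ τ
  consistent : ∀ (s : S) (e : E) (s' : S), A.delta s e = some s' →
    (sig e).apply (sup s) = some (sup s')

/-- The state separation property. -/
def SSP (τ : Set Interaction) {S E : Type} (A : TS S E) : Prop :=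
  ∀ s s' : S, s ≠ s' → ∃ R : Region τ A, R.sup s ≠ R.sup s'

/-- The event state separation property. -/
def ESSP (τ : Set Interaction) {S E : Type} (A : TS S E) : Prop :=
  ∀ (s : S) (e : E), A.delta s e = none →
    ∃ R : Region τ A, (R.sig e).apply (R.sup s) = none

/-- `τ`-feasibility: both the `τ`-SSP and the `τ`-ESSP. -/
def Feasible (τ : Set Interaction) {S E : Type} (A : TS S E) : Prop :=
  SSP τ A ∧ ESSP τ A

/-- A union of transition systems with pairwise disjoint states (disjointness is
enforced by the sigma type of states) over a common event alphabet. -/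
def Union (ι : Type) (S : ι → Type) (E : Type) : Type := (i : ι) → TS (S i) E

/-- A `τ`-region of a union: its restriction to every component is a region. -/
structure URegion (τ : Set Interaction) {ι : Type} {S : ι → Type} {E : Type}
    (U : Union ι S E) where
  sup : (Σ i : ι, S i) → Bool
  sig : E → Interaction
  sig_mem : ∀ e : E, sig e ∈ τ
  consistent : ∀ (i : ι) (s : S i) (e : E) (s' : S i), (U i).delta s e = some s' →
    (sig e).apply (sup ⟨i, s⟩) = some (sup ⟨i, s'⟩)

/-- SSP for unions: distinct states of a common component are separable. -/
def USSP (τ : Set Interaction) {ι : Type} {S : ι → Type} {E : Type}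
    (U : Union ι S E) : Prop :=
  ∀ (i : ι) (s s' : S i), s ≠ s' → ∃ R : URegion τ U, R.sup ⟨i, s⟩ ≠ R.sup ⟨i, s'⟩

/-- ESSP for unions: every event is inhibitable at every state where it does not occur. -/
def UESSP (τ : Set Interaction) {ι : Type} {S : ι → Type} {E : Type}
    (U : Union ι S E) : Prop :=
  ∀ (e : E) (i : ι) (s : S i), (U i).delta s e = none →
    ∃ R : URegion τ U, (R.sig e).apply (R.sup ⟨i, s⟩) = none

/-- States of the joining `A(U)`: the states of the union together with the
connector states `⊥_0, …, ⊥_{4n}` and `⊤_{i,1}, ⊤_{i,2}, ⊤_{i,3}` (encoded as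
`(i, 0), (i, 1), (i, 2)`). -/
abbrev JState (n : ℕ) (S : Fin n → Type) : Type :=
  (Σ i : Fin n, S i) ⊕ (Fin (4 * n + 1) ⊕ (Fin n × Fin 3))

/-- Events of the joining: the events of the union together with the fresh
events `⊙_i, ⊗_i, ⊖_i, ⊕_i` (encoded as `(i, 0), (i, 1), (i, 2), (i, 3)`). -/
abbrev JEvent (n : ℕ) (E : Type) : Type := E ⊕ (Fin n × Fin 4)

open Classical in
/-- The joining `A(U)` of a union `U = U(A_0, …, A_{n-1})`. -/
noncomputable def joining {n : ℕ} {S : Fin n → Type} {E : Type} (U : Union (Fin n) S E) :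
    TS (JState n S) (JEvent n E) where
  init := Sum.inr (Sum.inl ⟨0, by omega⟩)
  delta := fun st ev =>
    match st, ev with
    | Sum.inl ⟨i, s⟩, Sum.inl e => ((U i).delta s e).map (fun s' => Sum.inl ⟨i, s'⟩)
    | Sum.inl ⟨i, s⟩, Sum.inr jc =>
        if i = jc.1 ∧ jc.2 = (3 : Fin 4) ∧ s = (U i).init
        then some (Sum.inr (Sum.inr (jc.1, (2 : Fin 3)))) else none
    | Sum.inr (Sum.inl _), Sum.inl _ => none
    | Sum.inr (Sum.inl bs), Sum.inr jc =>
        if jc.2 = (1 : Fin 4) then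
          -- ⊗ : ⊥_{4i} ↔ ⊥_{4i+1} and ⊥_{4i+3} ↔ ⊥_{4i+4}
          if bs.val = 4 * jc.1.val then
            some (Sum.inr (Sum.inl ⟨4 * jc.1.val + 1, by have := jc.1.isLt; omega⟩))
          else if bs.val = 4 * jc.1.val + 1 then
            some (Sum.inr (Sum.inl ⟨4 * jc.1.val, by have := jc.1.isLt; omega⟩))
          else if bs.val = 4 * jc.1.val + 3 then
            some (Sum.inr (Sum.inl ⟨4 * jc.1.val + 4, by have := jc.1.isLt; omega⟩))
          else if bs.val = 4 * jc.1.val + 4 then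
            some (Sum.inr (Sum.inl ⟨4 * jc.1.val + 3, by have := jc.1.isLt; omega⟩))
          else none
        else if jc.2 = (0 : Fin 4) then
          -- ⊙ : ⊥_{4i+1} → ⊥_{4i+2} and ⊥_{4i+2} ↔ ⊥_{4i+3}
          if bs.val = 4 * jc.1.val + 1 then
            some (Sum.inr (Sum.inl ⟨4 * jc.1.val + 2, by have := jc.1.isLt; omega⟩))
          else if bs.val = 4 * jc.1.val + 2 then
            some (Sum.inr (Sum.inl ⟨4 * jc.1.val + 3, by have := jc.1.isLt; omega⟩))
          else if bs.val = 4 * jc.1.val + 3 then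
            some (Sum.inr (Sum.inl ⟨4 * jc.1.val + 2, by have := jc.1.isLt; omega⟩))
          else none
        else if jc.2 = (2 : Fin 4) then
          -- ⊖ : ⊥_{4i+2} → ⊤_{i,1}
          if bs.val = 4 * jc.1.val + 2 then
            some (Sum.inr (Sum.inr (jc.1, (0 : Fin 3))))
          else none
        else none
    | Sum.inr (Sum.inr _), Sum.inl _ => none
    | Sum.inr (Sum.inr jt), Sum.inr jc =>
        if jc.1 = jt.1 then
          if jc.2 = (2 : Fin 4) then
            -- ⊖ : ⊤_{i,1} ↔ ⊤_{i,2}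
            if jt.2 = (0 : Fin 3) then some (Sum.inr (Sum.inr (jt.1, (1 : Fin 3))))
            else if jt.2 = (1 : Fin 3) then some (Sum.inr (Sum.inr (jt.1, (0 : Fin 3))))
            else none
          else if jc.2 = (0 : Fin 4) then
            -- ⊙ : ⊤_{i,2} ↔ ⊤_{i,3}
            if jt.2 = (1 : Fin 3) then some (Sum.inr (Sum.inr (jt.1, (2 : Fin 3))))
            else if jt.2 = (2 : Fin 3) then some (Sum.inr (Sum.inr (jt.1, (1 : Fin 3))))
            else none
          else if jc.2 = (3 : Fin 4) then
            -- ⊕ : ⊤_{i,3} ↔ s^i_0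
            if jt.2 = (2 : Fin 3) then some (Sum.inl ⟨jt.1, (U jt.1).init⟩)
            else none
          else none
        else none

/-- The type of nets `{nop, set, swap, free}`, i.e. the single member of `σ1`. -/
def tau1 : Set Interaction :=
  {Interaction.nop, Interaction.set, Interaction.swap, Interaction.free}

/-- Membership in `σ2 = { {nop, set, swap, used} ∪ ω : ω ⊆ {res, free} }`. -/
def sigma2mem (τ : Set Interaction) : Prop :=
  ∃ ω : Set Interaction, ω ⊆ {Interaction.res, Interaction.free} ∧
    τ = ({Interaction.nop, Interaction.set, Interaction.swap, Interaction.used} :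
      Set Interaction) ∪ ω

/-- Direction of an edge of a chain-shaped transition system. -/
inductive Dir : Type
  | fwd | bwd | both
  deriving DecidableEq

def Dir.allowsFwd : Dir → Bool
  | .fwd => true
  | .both => true
  | .bwd => false

def Dir.allowsBwd : Dir → Bool
  | .bwd => true
  | .both => true
  | .fwd => false

def echk {E : Type} [DecidableEq E] (o : Option (E × Dir)) (e : E) (fwd : Bool) : Bool :=
  match o with
  | none => false
  | some (e', d) => decide (e' = e) && (if fwd then d.allowsFwd else d.allowsBwd)

/-- Transition function of a chain with edge specification `spec`:
`spec[t] = (e, d)` means an edge between states `t` and `t + 1` labelled `e`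
with direction `d` (forward, backward or both). -/
def chainDelta {E : Type} [DecidableEq E] (spec : List (E × Dir)) (s : ℕ) (e : E) :
    Option ℕ :=
  if echk spec[s]? e true = true then some (s + 1)
  else if s ≠ 0 ∧ echk spec[s - 1]? e false = true then some (s - 1)
  else none

/-- A chain-shaped transition system with `n + 1` states whose initial state is
the last state of the chain. -/
def chainTS {E : Type} [DecidableEq E] (n : ℕ) (spec : List (E × Dir)) :
    TS (Fin (n + 1)) E where
  init := Fin.last n
  delta := fun s e => (chainDelta spec s.val e).bind fun r =>
    if h : r < n + 1 then some ⟨r, h⟩ else none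

/-- Index set of the gadget transition systems of `U^σ_φ`. -/
inductive GIdx (m : ℕ) : Type
  | H : Fin (4 * m) → GIdx m
  | F0 : GIdx m
  | F1 : GIdx m
  | F2 : GIdx m
  | G : Fin m → GIdx m
  | D : Fin (3 * m) → GIdx m
  | T0 : Fin m → GIdx m
  | T1 : Fin m → GIdx m
  | T2 : Fin m → GIdx m
  | T3 : Fin m → GIdx m
  deriving DecidableEq, Fintype

/-- Events of the gadgets of `U^σ_φ`; `u g` is the unique fresh event of gadget `g`
and `x vv` is the event of the variable `vv` of `φ`. -/
inductive GEvent (V : Type) (m : ℕ) : Type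
  | k : GEvent V m
  | mev : GEvent V m
  | z : GEvent V m
  | q : Fin 4 → GEvent V m
  | v : Fin (4 * m) → GEvent V m
  | w : Fin m → GEvent V m
  | y : Fin m → GEvent V m
  | p : Fin (3 * m) → GEvent V m
  | a : Fin (3 * m) → GEvent V m
  | x : V → GEvent V m
  | u : GIdx m → GEvent V m
  deriving DecidableEq

/-- State spaces of the gadget transition systems. -/
def GS (m : ℕ) : GIdx m → Type
  | .H _ => Fin 6
  | .F0 => Fin 9
  | .F1 => Fin 6
  | .F2 => Fin 10
  | .G _ => Fin 9
  | .D _ => Fin 9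
  | .T0 _ => Fin 18
  | .T1 _ => Fin 5
  | .T2 _ => Fin 5
  | .T3 _ => Fin 5

def fmul4 {m : ℕ} (i : Fin m) (o : Fin 4) : Fin (4 * m) :=
  ⟨4 * i.val + o.val, by have h1 := i.isLt; have h2 := o.isLt; omega⟩

def fmul3 {m : ℕ} (i : Fin m) (o : Fin 3) : Fin (3 * m) :=
  ⟨3 * i.val + o.val, by have h1 := i.isLt; have h2 := o.isLt; omega⟩

/-- The union `U^σ_φ` for a cubic monotone 3-CNF `φ` given by its clauses
`X : Fin m → Fin 3 → V`.  For `b = false` this is `U^{σ1}_φ`, for `b = true`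
it is `U^{σ2}_φ` (in which the events `v_{4i}` and `w_i` of `T_{i,0}` are exchanged). -/
def gadget {V : Type} [DecidableEq V] (m : ℕ) (X : Fin m → Fin 3 → V) (b : Bool) :
    Union (GIdx m) (GS m) (GEvent V m) := fun idx =>
  match idx with
  | .H j => chainTS 5
      [(.k, .both), (.mev, .both), (.v j, .both), (.k, .both), (.u (.H j), .both)]
  | .F0 => chainTS 8
      [(.k, .both), (.mev, .both), (.q 0, .both), (.k, .both), (.mev, .both),
       (.q 1, .both), (.k, .both), (.u .F0, .both)]
  | .F1 => chainTS 5
      [(.k, .both), (.q 2, .both), (.q 3, .both), (.k, .both), (.u .F1, .both)]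
  | .F2 => chainTS 9
      [(.k, .both), (.q 2, .both), (.q 0, .both), (.z, .both), (.q 1, .both),
       (.z, .both), (.q 3, .both), (.k, .both), (.u .F2, .both)]
  | .G j => chainTS 8
      [(.k, .both), (.y j, .both), (.z, .fwd), (.z, .both), (.y j, .both),
       (.w j, .both), (.k, .both), (.u (.G j), .both)]
  | .D l => chainTS 8
      [(.k, .both), (.p l, .both), (.z, .fwd), (.z, .both), (.p l, .both),
       (.a l, .both), (.k, .both), (.u (.D l), .both)]
  | .T0 i => chainTS 17
      [(.k, .both),
       ((if b then .w i else .v (fmul4 i 0)), .both),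
       (.a (fmul3 i 0), .both),
       (.x (X i 0), .both),
       (.x (X i 0), .bwd),
       (.a (fmul3 i 0), .both),
       (.a (fmul3 i 1), .both),
       (.x (X i 1), .both),
       (.x (X i 1), .bwd),
       (.a (fmul3 i 1), .both),
       (.a (fmul3 i 2), .both),
       (.x (X i 2), .both),
       (.x (X i 2), .bwd),
       (.a (fmul3 i 2), .both),
       ((if b then .v (fmul4 i 0) else .w i), .both),
       (.k, .both),
       (.u (.T0 i), .both)]
  | .T1 i => chainTS 4
      [(.x (X i 0), .both), (.v (fmul4 i 1), .both), (.x (X i 1), .both),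
       (.u (.T1 i), .both)]
  | .T2 i => chainTS 4
      [(.x (X i 0), .both), (.v (fmul4 i 2), .both), (.x (X i 2), .both),
       (.u (.T2 i), .both)]
  | .T3 i => chainTS 4
      [(.x (X i 1), .both), (.v (fmul4 i 3), .both), (.x (X i 2), .both),
       (.u (.T3 i), .both)]

/-- `φ` is a cubic monotone 3-CNF: the three variables of every clause are
pairwise distinct, and every variable occurs in exactly three clauses. -/
def Cubic {V : Type} [Fintype V] [DecidableEq V] (m : ℕ) (X : Fin m → Fin 3 → V) : Prop :=
  (∀ i : Fin m, Function.Injective (X i)) ∧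
  ∀ vv : V, (Finset.univ.filter (fun pr : Fin m × Fin 3 => X pr.1 pr.2 = vv)).card = 3

/-- `M` is a one-in-three model of `φ`: it contains exactly one variable of
every clause. -/
def OneInThree {V : Type} (m : ℕ) (X : Fin m → Fin 3 → V) (M : Set V) : Prop :=
  ∀ i : Fin m, ∃! r : Fin 3, X i r ∈ M

def hidx {m : ℕ} (hm : 0 < m) : Fin (4 * m) := ⟨0, by omega⟩

/-- The state `h_{0,2}` of the gadget `H_0`. -/
def h02 {m : ℕ} (hm : 0 < m) : Σ i : GIdx m, GS m i := ⟨GIdx.H (hidx hm), (2 : Fin 6)⟩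

/-- The gadget union re-indexed over `Fin (card (GIdx m))`, so that its joining
is defined. -/
noncomputable def gadgetFin {V : Type} [DecidableEq V] (m : ℕ)
    (X : Fin m → Fin 3 → V) (b : Bool) :
    Union (Fin (Fintype.card (GIdx m)))
      (fun j => GS m ((Fintype.equivFin (GIdx m)).symm j)) (GEvent V m) :=
  fun j => gadget m X b ((Fintype.equivFin (GIdx m)).symm j)

/-! ### Chains and their supports -/

/-- The consistency condition a region with signature `i` imposes on the supports `b`, `b'` of the
two ends of an edge of direction `d`. -/
def edgeOK (i : Interaction) (d : Dir) (b b' : Bool) : Bool :=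
  (!d.allowsFwd || decide (i.apply b = some b')) && (!d.allowsBwd || decide (i.apply b' = some b))

/-- Search for a support of a chain with edges `(interaction, direction)`, starting at position
`t` with support `b`, such that every state `t'` with support `b'` satisfies `cs t' b'`. -/
def solv (cs : ℕ → Bool → Bool) : List (Interaction × Dir) → ℕ → Bool → Bool
  | [], t, b => cs t b
  | (i, d) :: l, t, b => cs t b && ((edgeOK i d b false && solv cs l (t + 1) false) ||
      (edgeOK i d b true && solv cs l (t + 1) true))

/-- Some support of the chain `l` satisfies the side condition `cs` at every state. -/
def solvable (cs : ℕ → Bool → Bool) (l : List (Interaction × Dir)) : Bool :=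
  solv cs l 0 false || solv cs l 0 true

/-- The trivial side condition. -/
def anyS : ℕ → Bool → Bool := fun _ _ => true

/-- The side condition that the support vanishes on the states listed in `Z`. -/
def zeroOn (Z : List ℕ) : ℕ → Bool → Bool := fun t b => !b || !(Z.contains t)

theorem solv_sound (cs : ℕ → Bool → Bool) (l : List (Interaction × Dir)) :
    ∀ (t : ℕ) (b : Bool), solv cs l t b = true →
    ∃ f : ℕ → Bool, f 0 = b ∧ (∀ j, j ≤ l.length → cs (t + j) (f j) = true) ∧
      ∀ j i d, l[j]? = some (i, d) → edgeOK i d (f j) (f (j + 1)) = true := by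
  induction l with
  | nil =>
    intro t b h
    refine ⟨fun _ => b, rfl, ?_, by simp⟩
    intro j hj
    have : j = 0 := by simpa using hj
    subst this
    simpa [solv] using h
  | cons p l ih =>
    obtain ⟨i, d⟩ := p
    intro t b h
    obtain ⟨b', hc, he, hs⟩ : ∃ b', cs t b = true ∧ edgeOK i d b b' = true ∧
        solv cs l (t + 1) b' = true := by
      simp only [solv, Bool.and_eq_true, Bool.or_eq_true] at h
      rcases h with ⟨h1, h2 | h2⟩
      · exact ⟨_, h1, h2⟩
      · exact ⟨_, h1, h2⟩
    obtain ⟨f, hf0, hf1, hf2⟩ := ih _ _ hs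
    refine ⟨fun j => Nat.casesOn j b f, rfl, ?_, ?_⟩
    · intro j hj
      cases j with
      | zero => simpa using hc
      | succ j =>
        have := hf1 j (by simpa using hj)
        rw [show t + (j + 1) = t + 1 + j by omega]
        exact this
    · intro j i' d' hj
      cases j with
      | zero =>
        simp only [List.getElem?_cons_zero, Option.some.injEq, Prod.mk.injEq] at hj
        obtain ⟨rfl, rfl⟩ := hj
        simpa [hf0] using he
      | succ j => exact hf2 j i' d' (by simpa using hj)

theorem solvable_sound {cs : ℕ → Bool → Bool} {l : List (Interaction × Dir)}
    (h : solvable cs l = true) :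
    ∃ f : ℕ → Bool, (∀ j, j ≤ l.length → cs j (f j) = true) ∧
      ∀ j i d, l[j]? = some (i, d) → edgeOK i d (f j) (f (j + 1)) = true := by
  simp only [solvable, Bool.or_eq_true] at h
  rcases h with h | h
  all_goals
    obtain ⟨f, -, h1, h2⟩ := solv_sound cs l _ _ h
    exact ⟨f, by simpa using h1, h2⟩

/-! ### The gadgets as relabelled patterns -/

/-- The shapes of gadgets; `T_{i,1}`, `T_{i,2}`, `T_{i,3}` share the shape `T1`. -/
inductive Kind : Type
  | H | F0 | F1 | F2 | G | D | T0 | T1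

def kind {m : ℕ} : GIdx m → Kind
  | .H _ => .H
  | .F0 => .F0
  | .F1 => .F1
  | .F2 => .F2
  | .G _ => .G
  | .D _ => .D
  | .T0 _ => .T0
  | .T1 _ => .T1
  | .T2 _ => .T1
  | .T3 _ => .T1

/-- The chain of a shape, with numbers standing for the events. -/
def pat : Kind → List (ℕ × Dir)
  | .H => [(0, .both), (1, .both), (2, .both), (0, .both), (3, .both)]
  | .F0 => [(0, .both), (1, .both), (2, .both), (0, .both), (1, .both), (3, .both), (0, .both),
      (4, .both)]
  | .F1 => [(0, .both), (1, .both), (2, .both), (0, .both), (3, .both)]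
  | .F2 => [(0, .both), (1, .both), (2, .both), (3, .both), (4, .both), (3, .both), (5, .both),
      (0, .both), (6, .both)]
  | .G => [(0, .both), (1, .both), (2, .fwd), (2, .both), (1, .both), (3, .both), (0, .both),
      (4, .both)]
  | .D => [(0, .both), (1, .both), (2, .fwd), (2, .both), (1, .both), (3, .both), (0, .both),
      (4, .both)]
  | .T0 => [(0, .both), (1, .both), (2, .both), (3, .both), (3, .bwd), (2, .both), (4, .both),
      (5, .both), (5, .bwd), (4, .both), (6, .both), (7, .both), (7, .bwd), (6, .both),
      (8, .both), (0, .both), (9, .both)]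
  | .T1 => [(0, .both), (1, .both), (2, .both), (3, .both)]

/-- The number of events of a shape. -/
def rk : Kind → ℕ
  | .H => 4
  | .F0 => 5
  | .F1 => 4
  | .F2 => 7
  | .G => 5
  | .D => 5
  | .T0 => 10
  | .T1 => 4

section Gadgets

set_option linter.unusedSectionVars false

variable {V : Type} [DecidableEq V] {m : ℕ}

/-- The events of a gadget; the number `c` of the pattern stands for the `c`-th event. -/
def evs (X : Fin m → Fin 3 → V) : GIdx m → List (GEvent V m)
  | .H j => [.k, .mev, .v j, .u (.H j)]
  | .F0 => [.k, .mev, .q 0, .q 1, .u .F0]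
  | .F1 => [.k, .q 2, .q 3, .u .F1]
  | .F2 => [.k, .q 2, .q 0, .z, .q 1, .q 3, .u .F2]
  | .G j => [.k, .y j, .z, .w j, .u (.G j)]
  | .D l => [.k, .p l, .z, .a l, .u (.D l)]
  | .T0 i => [.k, .w i, .a (fmul3 i 0), .x (X i 0), .a (fmul3 i 1), .x (X i 1), .a (fmul3 i 2),
      .x (X i 2), .v (fmul4 i 0), .u (.T0 i)]
  | .T1 i => [.x (X i 0), .v (fmul4 i 1), .x (X i 1), .u (.T1 i)]
  | .T2 i => [.x (X i 0), .v (fmul4 i 2), .x (X i 2), .u (.T2 i)]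
  | .T3 i => [.x (X i 1), .v (fmul4 i 3), .x (X i 2), .u (.T3 i)]

/-- The event denoted by the number `c` in the pattern of the gadget `A`. -/
def ev (X : Fin m → Fin 3 → V) (A : GIdx m) (c : ℕ) : GEvent V m := (evs X A).getD c .k

/-- The edge specification of a gadget. -/
def spec (X : Fin m → Fin 3 → V) (A : GIdx m) : List (GEvent V m × Dir) :=
  (pat (kind A)).map fun p => (ev X A p.1, p.2)

/-- The position of a state in its chain. -/
def val : (A : GIdx m) → GS m A → ℕ
  | .H _, s => Fin.val (n := 6) s
  | .F0, s => Fin.val (n := 9) s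
  | .F1, s => Fin.val (n := 6) s
  | .F2, s => Fin.val (n := 10) s
  | .G _, s => Fin.val (n := 9) s
  | .D _, s => Fin.val (n := 9) s
  | .T0 _, s => Fin.val (n := 18) s
  | .T1 _, s => Fin.val (n := 5) s
  | .T2 _, s => Fin.val (n := 5) s
  | .T3 _, s => Fin.val (n := 5) s

theorem val_inj (A : GIdx m) (s s' : GS m A) (h : val A s = val A s') : s = s' := by
  cases A <;> exact Fin.ext h

theorem val_le (A : GIdx m) (s : GS m A) : val A s ≤ (pat (kind A)).length := by
  cases A <;> exact Nat.lt_succ_iff.mp (Fin.isLt _)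

theorem val_surj (A : GIdx m) (t : ℕ) (ht : t ≤ (pat (kind A)).length) :
    ∃ s : GS m A, val A s = t := by
  cases A <;> exact ⟨(⟨t, Nat.lt_succ_iff.mpr ht⟩ : Fin _), rfl⟩

theorem val_init (X : Fin m → Fin 3 → V) (A : GIdx m) :
    val A (gadget m X true A).init = (pat (kind A)).length := by
  cases A <;> rfl

theorem length_evs (X : Fin m → Fin 3 → V) (A : GIdx m) : (evs X A).length = rk (kind A) := by
  cases A <;> rfl

theorem length_spec (X : Fin m → Fin 3 → V) (A : GIdx m) :
    (spec X A).length = (pat (kind A)).length := by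
  simp [spec]

theorem chainTS_delta_some {E : Type} [DecidableEq E] {n : ℕ} {l : List (E × Dir)}
    {s s' : Fin (n + 1)} {e : E} (h : (chainTS n l).delta s e = some s') :
    chainDelta l s.val e = some s'.val := by
  simp only [chainTS, Option.bind_eq_some_iff] at h
  obtain ⟨r, h1, h2⟩ := h
  split at h2
  · rw [h1]
    simp only [Option.some.injEq] at h2
    rw [← h2]
  · exact absurd h2 (by simp)

theorem chainTS_delta_none {E : Type} [DecidableEq E] {n : ℕ} {l : List (E × Dir)}
    (hl : l.length = n) {s : Fin (n + 1)} {e : E} (h : (chainTS n l).delta s e = none) :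
    chainDelta l s.val e = none := by
  by_contra hc
  obtain ⟨r, hr⟩ := Option.ne_none_iff_exists'.mp hc
  have hlt : r < n + 1 := by
    have := s.isLt
    unfold chainDelta at hr
    split at hr
    · rename_i h1
      have hs : s.val < l.length := by
        by_contra hge
        rw [List.getElem?_eq_none (by omega)] at h1
        simp [echk] at h1
      simp only [Option.some.injEq] at hr
      omega
    · split at hr
      · simp only [Option.some.injEq] at hr
        omega
      · exact absurd hr (by simp)
  simp [chainTS, hr] at h
  omega

theorem gadget_delta_some (X : Fin m → Fin 3 → V) (A : GIdx m) {s s' : GS m A} {e : GEvent V m}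
    (h : (gadget m X true A).delta s e = some s') :
    chainDelta (spec X A) (val A s) e = some (val A s') := by
  cases A <;> exact chainTS_delta_some h

theorem gadget_delta_none (X : Fin m → Fin 3 → V) (A : GIdx m) {s : GS m A} {e : GEvent V m}
    (h : (gadget m X true A).delta s e = none) :
    chainDelta (spec X A) (val A s) e = none := by
  cases A <;> exact chainTS_delta_none rfl h

theorem fmul3_inj (i j : Fin m) (a b : Fin 3) : fmul3 i a = fmul3 j b ↔ i = j ∧ a = b := by
  constructor
  · intro h
    have h1 : 3 * i.val + a.val = 3 * j.val + b.val := congrArg Fin.val h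
    constructor <;> apply Fin.ext <;> omega
  · rintro ⟨rfl, rfl⟩; rfl

theorem fmul4_inj (i j : Fin m) (a b : Fin 4) : fmul4 i a = fmul4 j b ↔ i = j ∧ a = b := by
  constructor
  · intro h
    have h1 : 4 * i.val + a.val = 4 * j.val + b.val := congrArg Fin.val h
    constructor <;> apply Fin.ext <;> omega
  · rintro ⟨rfl, rfl⟩; rfl

theorem nodup_evs (X : Fin m → Fin 3 → V) (hX : ∀ i, Function.Injective (X i)) (A : GIdx m) :
    (evs X A).Nodup := by
  cases A <;> simp [evs, fmul3_inj, (hX _).eq_iff]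

theorem pat_lt (K : Kind) : ∀ p ∈ pat K, p.1 < rk K := by
  cases K <;> decide

theorem ev_eq_iff (X : Fin m → Fin 3 → V) (hX : ∀ i, Function.Injective (X i)) (A : GIdx m)
    {c : ℕ} (hc : c < rk (kind A)) (e : GEvent V m) :
    ev X A c = e ↔ c = (evs X A).idxOf e := by
  have hc' : c < (evs X A).length := by rwa [length_evs]
  have hev : ev X A c = (evs X A)[c] := by simp [ev, hc']
  rw [hev]
  constructor
  · rintro rfl
    exact (List.Nodup.idxOf_getElem (nodup_evs X hX A) c hc').symm
  · rintro rfl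
    exact List.getElem_idxOf hc'

theorem idx_le (X : Fin m → Fin 3 → V) (A : GIdx m) (e : GEvent V m) :
    (evs X A).idxOf e ≤ rk (kind A) := by
  rw [← length_evs X A]; exact List.idxOf_le_length

theorem chainDelta_spec (X : Fin m → Fin 3 → V) (hX : ∀ i, Function.Injective (X i))
    (A : GIdx m) (t : ℕ) (e : GEvent V m) :
    chainDelta (spec X A) t e = chainDelta (pat (kind A)) t ((evs X A).idxOf e) := by
  have h : ∀ (t : ℕ) (b : Bool), echk (spec X A)[t]? e b =
      echk (pat (kind A))[t]? ((evs X A).idxOf e) b := by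
    intro t b
    simp only [spec, List.getElem?_map]
    cases hp : (pat (kind A))[t]? with
    | none => rfl
    | some p =>
      have hlt := pat_lt (kind A) p (List.mem_of_getElem? hp)
      simp only [echk, Option.map_some]
      congr 1
      exact decide_eq_decide.mpr (ev_eq_iff X hX A hlt e)
  simp only [chainDelta, h]

/-! ### Regions from signatures -/

/-- The chain of interactions that a signature induces on a gadget. -/
def isig (X : Fin m → Fin 3 → V) (sig : GEvent V m → Interaction) (A : GIdx m) :
    List (Interaction × Dir) :=
  (spec X A).map fun p => (sig p.1, p.2)

theorem chainDelta_edge {E : Type} [DecidableEq E] (l : List (E × Dir)) (sig : E → Interaction)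
    (f : ℕ → Bool)
    (hf : ∀ j i d, (l.map fun p => (sig p.1, p.2))[j]? = some (i, d) →
      edgeOK i d (f j) (f (j + 1)) = true)
    {s s' : ℕ} {e : E} (h : chainDelta l s e = some s') :
    (sig e).apply (f s) = some (f s') := by
  have key : ∀ (t : ℕ) (b : Bool), echk l[t]? e b = true → ∃ d : Dir, l[t]? = some (e, d) ∧
      (if b then d.allowsFwd else d.allowsBwd) = true := by
    intro t b h
    cases hp : l[t]? with
    | none => rw [hp] at h; simp [echk] at h
    | some p =>
      obtain ⟨e', d⟩ := p
      rw [hp] at h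
      simp only [echk, Bool.and_eq_true, decide_eq_true_eq] at h
      exact ⟨d, by rw [h.1], by simpa using h.2⟩
  unfold chainDelta at h
  split at h
  · rename_i h1
    obtain ⟨d, hd, hd'⟩ := key _ _ h1
    have := hf s (sig e) d (by simp [hd])
    simp only [Option.some.injEq] at h
    subst h
    simp only [if_true] at hd'
    simp only [edgeOK, hd', Bool.not_true, Bool.false_or, Bool.and_eq_true,
      decide_eq_true_eq] at this
    exact this.1
  · split at h
    · rename_i h1
      obtain ⟨d, hd, hd'⟩ := key _ _ h1.2
      have := hf (s - 1) (sig e) d (by simp [hd])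
      simp only [Option.some.injEq] at h
      subst h
      rw [show s - 1 + 1 = s by omega] at this
      simp only [Bool.false_eq_true, if_false] at hd'
      simp only [edgeOK, hd', Bool.not_true, Bool.false_or, Bool.and_eq_true,
        decide_eq_true_eq] at this
      exact this.2
    · exact absurd h (by simp)

/-- The interactions available in every type of `σ2`. -/
def Core (τ : Set Interaction) : Prop :=
  Interaction.nop ∈ τ ∧ Interaction.set ∈ τ ∧ Interaction.swap ∈ τ ∧ Interaction.used ∈ τ

/-- Gadgets have disjoint states, so a signature extends to a region of the union as soon as it is
solvable on every gadget, and the support can be prescribed on one gadget `A`. -/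
theorem mkRegion {τ : Set Interaction} (X : Fin m → Fin 3 → V) (sig : GEvent V m → Interaction)
    (hmem : ∀ e, sig e ∈ τ) (hgood : ∀ B, solvable anyS (isig X sig B) = true)
    (A : GIdx m) (cs : ℕ → Bool → Bool) (hA : solvable cs (isig X sig A) = true) :
    ∃ R : URegion τ (gadget m X true), R.sig = sig ∧
      ∀ s, cs (val A s) (R.sup ⟨A, s⟩) = true := by
  classical
  choose f hf1 hf2 using fun B => solvable_sound (hgood B)
  obtain ⟨g, hg1, hg2⟩ := solvable_sound hA
  refine ⟨⟨fun p => Function.update f A g p.1 (val p.1 p.2), sig, hmem, ?_⟩, rfl, ?_⟩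
  · intro B s e s' h
    refine chainDelta_edge (spec X B) sig _ ?_ (gadget_delta_some X B h)
    by_cases hB : B = A
    · subst hB
      rw [Function.update_self]
      exact hg2
    · rw [Function.update_of_ne hB]
      exact hf2 B
  · intro s
    simp only [Function.update_self]
    exact hg1 _ (by simpa [isig, length_spec] using val_le A s)

/-- A region in which `e` is `used` inhibits `e` wherever the support vanishes. -/
theorem inhib {τ : Set Interaction} (X : Fin m → Fin 3 → V) (sig : GEvent V m → Interaction)
    (hmem : ∀ e, sig e ∈ τ) (hgood : ∀ B, solvable anyS (isig X sig B) = true)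
    (A : GIdx m) (Z : List ℕ) (hA : solvable (zeroOn Z) (isig X sig A) = true)
    (e : GEvent V m) (he : sig e = .used) (s : GS m A) (hs : val A s ∈ Z) :
    ∃ R : URegion τ (gadget m X true), (R.sig e).apply (R.sup ⟨A, s⟩) = none := by
  obtain ⟨R, rfl, h2⟩ := mkRegion X sig hmem hgood A _ hA
  refine ⟨R, ?_⟩
  have h3 := h2 s
  simp only [zeroOn, Bool.or_eq_true, Bool.not_eq_true'] at h3
  rcases h3 with h3 | h3
  · rw [he, h3]; rfl
  · simp [hs] at h3

/-! ### Regions with one used event and one swapped event -/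

/-- `e` is `used`, `f` is `swap`, every other event is `nop`. -/
def nsSig (e f : GEvent V m) : GEvent V m → Interaction := fun x =>
  if x = e then .used else if x = f then .swap else .nop

/-- The counterpart of `nsSig` on a pattern. -/
def nsPat (K : Kind) (c c' : ℕ) : List (Interaction × Dir) :=
  (pat K).map fun p =>
    ((if p.1 = c then Interaction.used else if p.1 = c' then .swap else .nop), p.2)

theorem isig_ns (X : Fin m → Fin 3 → V) (hX : ∀ i, Function.Injective (X i)) (A : GIdx m)
    (e f : GEvent V m) :
    isig X (nsSig e f) A = nsPat (kind A) ((evs X A).idxOf e) ((evs X A).idxOf f) := by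
  simp only [isig, spec, nsPat, List.map_map]
  apply List.map_congr_left
  intro p hp
  have hlt := pat_lt (kind A) p hp
  simp only [Function.comp, nsSig, ev_eq_iff X hX A hlt]

/-- A sufficient condition for `nsSig e f` to be solvable on every gadget. Solvability means that
between two edges labelled `e` in one gadget, `f` occurs an even number of times; the exceptions
listed here are those relevant to `m` (in `H_j` and `F_0`) and `z` (in `F_2`), and `k` is left
out altogether. -/
def Compat (e f : GEvent V m) : Prop :=
  e ≠ .k ∧ ¬ (e = .mev ∧ (f = .k ∨ f = .q 0)) ∧ ¬ (e = .z ∧ f = .q 1)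

/-- The counterpart of `Compat` on a pattern. -/
def pcompat : Kind → ℕ → ℕ → Bool
  | .H, c, c' => c != 0 && !(c == 1 && c' == 0)
  | .F0, c, c' => c != 0 && !(c == 1 && (c' == 0 || c' == 2))
  | .F2, c, c' => c != 0 && !(c == 3 && (c' == 4))
  | .T1, _, _ => true
  | _, c, _ => c != 0

theorem ns_solvable (K : Kind) : ∀ c ≤ rk K, ∀ c' ≤ rk K, pcompat K c c' = true →
    solvable anyS (nsPat K c c') = true := by
  cases K <;> decide +kernel

theorem idx_lt_eq (X : Fin m → Fin 3 → V) (hX : ∀ i, Function.Injective (X i)) (A : GIdx m)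
    (c : ℕ) (hc : c < rk (kind A)) {e : GEvent V m} (h : (evs X A).idxOf e = c) :
    e = ev X A c :=
  ((ev_eq_iff X hX A hc e).mpr h.symm).symm

theorem pcompat_of_compat (X : Fin m → Fin 3 → V) (hX : ∀ i, Function.Injective (X i))
    (A : GIdx m) {e f : GEvent V m} (h : Compat e f) :
    pcompat (kind A) ((evs X A).idxOf e) ((evs X A).idxOf f) = true := by
  obtain ⟨h1, h2, h3⟩ := h
  have key := fun c hc e h => idx_lt_eq X hX A c hc (e := e) h
  have hle := fun c hc => key c hc e
  have hlf := fun c hc => key c hc f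
  generalize (evs X A).idxOf e = c at *
  generalize (evs X A).idxOf f = c' at *
  clear key
  cases A
  all_goals
    first
    | rfl
    | (simp only [kind, pcompat, bne_iff_ne, Bool.and_eq_true, Bool.not_eq_true', ne_eq,
        Bool.and_eq_false_iff, Bool.or_eq_false_iff, beq_eq_false_iff_ne]
       simp only [kind, rk] at hle hlf
       have hk : ¬ c = 0 := fun h => h1 (hle 0 (by omega) h)
       first
       | exact hk
       | (refine ⟨hk, ?_⟩
          by_contra hcon
          push Not at hcon
          first
          | exact h3 ⟨hle 3 (by omega) hcon.1, hlf 4 (by omega) hcon.2⟩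
          | exact h2 ⟨hle 1 (by omega) hcon.1, Or.inl (hlf 0 (by omega) hcon.2)⟩
          | (obtain ⟨ha, hb⟩ := hcon
             by_cases hc0 : c' = 0
             · exact h2 ⟨hle 1 (by omega) ha, Or.inl (hlf 0 (by omega) hc0)⟩
             · exact h2 ⟨hle 1 (by omega) ha, Or.inr (hlf 2 (by omega) (hb hc0))⟩)))

theorem nsSig_mem {τ : Set Interaction} (hτ : Core τ) (e f x : GEvent V m) : nsSig e f x ∈ τ := by
  obtain ⟨h1, h2, h3, h4⟩ := hτ
  unfold nsSig
  split_ifs <;> assumption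

theorem ns_good (X : Fin m → Fin 3 → V) (hX : ∀ i, Function.Injective (X i))
    {e f : GEvent V m} (h : Compat e f) (B : GIdx m) :
    solvable anyS (isig X (nsSig e f) B) = true := by
  rw [isig_ns X hX]
  exact ns_solvable _ _ (idx_le X B e) _ (idx_le X B f) (pcompat_of_compat X hX B h)

theorem compat_of_pcompat (X : Fin m → Fin 3 → V) (A : GIdx m) :
    ∀ c < rk (kind A), ∀ c' < rk (kind A), pcompat (kind A) c c' = true →
      Compat (ev X A c) (ev X A c') := by
  cases A <;> simp only [kind, rk] <;> intro c hc c' hc' h <;>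
    interval_cases c <;> first
      | (exfalso; simp [pcompat] at h; done)
      | (simp [Compat, ev, evs]; done)
      | (interval_cases c' <;> first
          | exact absurd h (by decide)
          | (simp [Compat, ev, evs]; done))

/-- The pairs (event, state) of a pattern not covered by signatures `nsSig`. -/
def leftover : Kind → ℕ → List ℕ
  | .H, 0 => [2, 5]
  | .H, 1 => [0]
  | .F0, 0 => [2, 5, 8]
  | .F0, 1 => [0, 3]
  | .F1, 0 => [2, 5]
  | .F2, 0 => [2, 3, 4, 5, 6, 9]
  | .G, 0 => [2, 3, 4, 5, 8]
  | .G, 3 => [1]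
  | .D, 0 => [2, 3, 4, 5, 8]
  | .D, 3 => [1]
  | .T0, 0 => [2, 3, 4, 5, 6, 7, 8, 9, 10, 11, 12, 13, 14, 17]
  | .T0, 1 => [6, 10, 14]
  | .T0, 2 => [10, 14]
  | .T0, 4 => [2, 14]
  | .T0, 6 => [2, 6]
  | .T0, 8 => [2, 6, 10]
  | _, _ => []

/-- Off `leftover`, an event of a shape is inhibited by swapping a suitable second event of the same
shape. This is a finite check over the eight shapes. -/
theorem pat_inhib (K : Kind) : ∀ c < rk K, ∀ t ≤ (pat K).length, chainDelta (pat K) t c = none →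
    t ∉ leftover K c → (List.range (rk K)).any (fun c' => pcompat K c c' &&
      solvable (zeroOn [t]) (nsPat K c c')) = true := by
  cases K <;> decide +kernel

theorem idx_ev (X : Fin m → Fin 3 → V) (hX : ∀ i, Function.Injective (X i)) (A : GIdx m)
    {c : ℕ} (hc : c < rk (kind A)) : (evs X A).idxOf (ev X A c) = c :=
  ((ev_eq_iff X hX A hc _).mp rfl).symm

theorem inhib_ns {τ : Set Interaction} (hτ : Core τ) (X : Fin m → Fin 3 → V)
    (hX : ∀ i, Function.Injective (X i)) (A : GIdx m) (c : ℕ) (hc : c < rk (kind A))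
    (s : GS m A) (hs : chainDelta (pat (kind A)) (val A s) c = none)
    (hl : val A s ∉ leftover (kind A) c) :
    ∃ R : URegion τ (gadget m X true), (R.sig (ev X A c)).apply (R.sup ⟨A, s⟩) = none := by
  have h := pat_inhib (kind A) c hc _ (val_le A s) hs hl
  simp only [List.any_eq_true, List.mem_range, Bool.and_eq_true] at h
  obtain ⟨c', hc', hp, hsol⟩ := h
  refine inhib X (nsSig (ev X A c) (ev X A c')) (nsSig_mem hτ _ _)
    (ns_good X hX (compat_of_pcompat X A c hc c' hc' hp)) A [val A s] ?_ _ ?_ s (by simp)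
  · rw [isig_ns X hX, idx_ev X hX A hc, idx_ev X hX A hc']
    exact hsol
  · simp [nsSig]

/-- An event is inhibited at the states of a gadget in which it does not occur: take the support
vanishing exactly on that gadget. -/
theorem inhib_foreign {τ : Set Interaction} (hτ : Core τ) (X : Fin m → Fin 3 → V) (A : GIdx m)
    (e : GEvent V m) (he : e ∉ evs X A) (s : GS m A) :
    ∃ R : URegion τ (gadget m X true), (R.sig e).apply (R.sup ⟨A, s⟩) = none := by
  classical
  refine ⟨⟨fun p => decide (p.1 ≠ A), fun x => if x ∈ evs X A then .nop else .used, ?_, ?_⟩, ?_⟩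
  · intro x
    split_ifs
    exacts [hτ.1, hτ.2.2.2]
  · intro B s x s' h
    by_cases hx : x ∈ evs X A
    · simp [hx, Interaction.apply]
    · have hB : B ≠ A := by
        rintro rfl
        refine hx ?_
        have h1 := gadget_delta_some X B h
        have key : ∀ (t : ℕ) (b : Bool), echk (spec X B)[t]? x b = true → x ∈ evs X B := by
          intro t b ht
          simp only [spec, List.getElem?_map] at ht
          cases hp : (pat (kind B))[t]? with
          | none => rw [hp] at ht; simp [echk] at ht
          | some p =>
            have hlt := pat_lt (kind B) p (List.mem_of_getElem? hp)
            rw [hp] at ht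
            simp only [echk, Option.map_some, Bool.and_eq_true, decide_eq_true_eq] at ht
            rw [← ht.1, ev, List.getD_eq_getElem _ _ (by rw [length_evs]; exact hlt)]
            exact List.getElem_mem _
        unfold chainDelta at h1
        split at h1
        · exact key _ _ (by assumption)
        · split at h1
          · rename_i h2
            exact key _ _ h2.2
          · exact absurd h1 (by simp)
      simp [hx, hB, Interaction.apply]
  · simp [he, Interaction.apply]

/-! ### Special regions -/

/-- `m` used, `k` and `q_0` swapped. -/
def mSig : GEvent V m → Interaction
  | .mev => .used
  | .k => .swap
  | .q c => if c = 0 then .swap else .nop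
  | _ => .nop

/-- `z` set, every `w_j` and `a_l` used. -/
def zSig : GEvent V m → Interaction
  | .z => .set
  | .w _ => .used
  | .a _ => .used
  | _ => .nop

/-- The variable event `vv` set, every `w_j` used, and the events `a_l` with `P l` used. -/
def xSig (vv : V) (P : Fin (3 * m) → Bool) : GEvent V m → Interaction
  | .x v' => if v' = vv then .set else .nop
  | .w _ => .used
  | .a l => if P l then .used else .nop
  | _ => .nop

/-- The variable event `X_{i,r}` set, `a_{3i+r}` swapped, and `v_{4i}` as well as `a_{3i+r'}` for
`r < r'` used. -/
def xaSig (X : Fin m → Fin 3 → V) (i : Fin m) (r : Fin 3) : GEvent V m → Interaction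
  | .x v' => if v' = X i r then .set else .nop
  | .a l => if l = fmul3 i r then .swap else if ∃ r', r < r' ∧ l = fmul3 i r' then .used else .nop
  | .v j => if j = fmul4 i 0 then .used else .nop
  | _ => .nop

/-- `k` used, and `q_2`, `q_3`, all `y_j`, `p_l`, variable events and fresh events swapped. -/
def kqSig : GEvent V m → Interaction
  | .k => .used
  | .q c => if c = 2 ∨ c = 3 then .swap else .nop
  | .y _ => .swap
  | .p _ => .swap
  | .x _ => .swap
  | .u _ => .swap
  | _ => .nop

/-- `k` used, `z` set, `a_l` and `p_l` swapped. -/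
def kaSig (l : Fin (3 * m)) : GEvent V m → Interaction
  | .k => .used
  | .z => .set
  | .a l' => if l' = l then .swap else .nop
  | .p l' => if l' = l then .swap else .nop
  | _ => .nop

/-- `k` used, `z` and `X_{j,2}` set, `w_j`, `y_j`, `a_{3j+2}` and `p_{3j+2}` swapped. -/
def kwSig (X : Fin m → Fin 3 → V) (j : Fin m) : GEvent V m → Interaction
  | .k => .used
  | .z => .set
  | .a l => if l = fmul3 j 2 then .swap else .nop
  | .p l => if l = fmul3 j 2 then .swap else .nop
  | .w j' => if j' = j then .swap else .nop
  | .y j' => if j' = j then .swap else .nop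
  | .x v' => if v' = X j 2 then .set else .nop
  | _ => .nop

open Classical in
/-- The signature of a one-in-three model `M`: `k` used, `m`, `q_0`, `q_1` and all `v_j` swapped,
the events of the variables in `M` set. -/
noncomputable def modelSig (M : Set V) : GEvent V m → Interaction
  | .k => .used
  | .mev => .swap
  | .q c => if c = 0 ∨ c = 1 then .swap else .nop
  | .v _ => .swap
  | .x v' => if v' ∈ M then .set else .nop
  | _ => .nop

theorem mSig_good (X : Fin m → Fin 3 → V) (B : GIdx m) :
    solvable anyS (isig X mSig B) = true := by
  cases B <;> rfl

theorem zSig_good (X : Fin m → Fin 3 → V) (B : GIdx m) :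
    solvable anyS (isig X zSig B) = true := by
  cases B <;> rfl

theorem kqSig_good (X : Fin m → Fin 3 → V) (B : GIdx m) :
    solvable anyS (isig X kqSig B) = true := by
  cases B <;> rfl

theorem kaSig_good (X : Fin m → Fin 3 → V) (l : Fin (3 * m)) (B : GIdx m) :
    solvable anyS (isig X (kaSig l) B) = true := by
  cases B <;> simp only [isig, spec, pat, kind, ev, evs, List.map_cons, List.map_nil, kaSig,
    List.getD_cons_zero, List.getD_cons_succ] <;> (try split_ifs) <;> rfl

theorem model_cases (X : Fin m → Fin 3 → V) (M : Set V) (hM : OneInThree m X M) (i : Fin m) :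
    (X i 0 ∈ M ∧ X i 1 ∉ M ∧ X i 2 ∉ M) ∨ (X i 0 ∉ M ∧ X i 1 ∈ M ∧ X i 2 ∉ M) ∨
      (X i 0 ∉ M ∧ X i 1 ∉ M ∧ X i 2 ∈ M) := by
  obtain ⟨r, hr, hu⟩ := hM i
  have hne : ∀ r', r' ≠ r → X i r' ∉ M := fun r' h h' => h (hu r' h')
  fin_cases r
  · exact Or.inl ⟨hr, hne 1 (by decide), hne 2 (by decide)⟩
  · exact Or.inr (Or.inl ⟨hne 0 (by decide), hr, hne 2 (by decide)⟩)
  · exact Or.inr (Or.inr ⟨hne 0 (by decide), hne 1 (by decide), hr⟩)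

theorem modelSig_good (X : Fin m → Fin 3 → V) (M : Set V) (hM : OneInThree m X M) (B : GIdx m) :
    solvable anyS (isig X (modelSig M) B) = true := by
  cases B with
  | T0 i | T1 i | T2 i | T3 i =>
    rcases model_cases X M hM i with ⟨h0, h1, h2⟩ | ⟨h0, h1, h2⟩ | ⟨h0, h1, h2⟩ <;>
    simp only [isig, spec, pat, kind, ev, evs, List.map_cons, List.map_nil, modelSig,
      List.getD_cons_zero, List.getD_cons_succ, h0, h1, h2, if_true, if_false] <;> rfl
  | _ =>
    simp only [isig, spec, pat, kind, ev, evs, List.map_cons, List.map_nil, modelSig,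
      List.getD_cons_zero, List.getD_cons_succ]
    rfl

/-- On `T_{i,0}` a variable equals at most one of the variables of the `i`-th clause. -/
theorem clause_cases (X : Fin m → Fin 3 → V) (hX : ∀ i, Function.Injective (X i)) (i : Fin m)
    (vv : V) : (X i 0 = vv ∧ X i 1 ≠ vv ∧ X i 2 ≠ vv) ∨ (X i 0 ≠ vv ∧ X i 1 = vv ∧ X i 2 ≠ vv) ∨
      (X i 0 ≠ vv ∧ X i 1 ≠ vv ∧ X i 2 = vv) ∨ (X i 0 ≠ vv ∧ X i 1 ≠ vv ∧ X i 2 ≠ vv) := by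
  have h01 : X i 0 ≠ X i 1 := fun h => absurd (hX i h) (by decide)
  have h02 : X i 0 ≠ X i 2 := fun h => absurd (hX i h) (by decide)
  have h12 : X i 1 ≠ X i 2 := fun h => absurd (hX i h) (by decide)
  grind

theorem xSig_good (X : Fin m → Fin 3 → V) (hX : ∀ i, Function.Injective (X i)) (vv : V)
    (P : Fin (3 * m) → Bool)
    (hP : ∀ i r r', X i r = vv → r ≤ r' → P (fmul3 i r') = false) (B : GIdx m) :
    solvable anyS (isig X (xSig vv P) B) = true := by
  cases B with
  | T0 i =>
    rcases clause_cases X hX i vv with ⟨h0, h1, h2⟩ | ⟨h0, h1, h2⟩ | ⟨h0, h1, h2⟩ | ⟨h0, h1, h2⟩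
    · have a0 := hP i 0 0 h0 (by decide)
      have a1 := hP i 0 1 h0 (by decide)
      have a2 := hP i 0 2 h0 (by decide)
      simp only [isig, spec, pat, kind, ev, evs, List.map_cons, List.map_nil, xSig,
        List.getD_cons_zero, List.getD_cons_succ, h0, h1, h2, a0, a1, a2, if_true, if_false]
      rfl
    · have a1 := hP i 1 1 h1 (by decide)
      have a2 := hP i 1 2 h1 (by decide)
      simp only [isig, spec, pat, kind, ev, evs, List.map_cons, List.map_nil, xSig,
        List.getD_cons_zero, List.getD_cons_succ, h0, h1, h2, a1, a2, if_true, if_false]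
      split_ifs <;> rfl
    · have a2 := hP i 2 2 h2 (by decide)
      simp only [isig, spec, pat, kind, ev, evs, List.map_cons, List.map_nil, xSig,
        List.getD_cons_zero, List.getD_cons_succ, h0, h1, h2, a2, if_true, if_false]
      split_ifs <;> rfl
    · simp only [isig, spec, pat, kind, ev, evs, List.map_cons, List.map_nil, xSig,
        List.getD_cons_zero, List.getD_cons_succ, h0, h1, h2, if_false]
      split_ifs <;> rfl
  | _ =>
    simp only [isig, spec, pat, kind, ev, evs, List.map_cons, List.map_nil, xSig,
      List.getD_cons_zero, List.getD_cons_succ]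
    try split_ifs
    all_goals rfl

theorem kwSig_good (X : Fin m → Fin 3 → V) (hX : ∀ i, Function.Injective (X i)) (j : Fin m)
    (B : GIdx m) : solvable anyS (isig X (kwSig X j) B) = true := by
  cases B with
  | T0 i =>
    by_cases hij : i = j
    · subst hij
      have h0 : X i 0 ≠ X i 2 := fun h => absurd (hX i h) (by decide)
      have h1 : X i 1 ≠ X i 2 := fun h => absurd (hX i h) (by decide)
      simp only [isig, spec, pat, kind, ev, evs, List.map_cons, List.map_nil, kwSig,
        List.getD_cons_zero, List.getD_cons_succ, fmul3_inj, h0, h1, if_true, if_false]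
      rfl
    · simp only [isig, spec, pat, kind, ev, evs, List.map_cons, List.map_nil, kwSig,
        List.getD_cons_zero, List.getD_cons_succ, fmul3_inj, hij, false_and, if_false]
      split_ifs <;> rfl
  | _ =>
    simp only [isig, spec, pat, kind, ev, evs, List.map_cons, List.map_nil, kwSig,
      List.getD_cons_zero, List.getD_cons_succ]
    try split_ifs
    all_goals rfl

theorem xaSig_good (X : Fin m → Fin 3 → V) (hX : ∀ i, Function.Injective (X i)) (i : Fin m)
    (r : Fin 3) (B : GIdx m) : solvable anyS (isig X (xaSig X i r) B) = true := by
  cases B with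
  | T0 i' =>
    by_cases hij : i' = i
    · subst hij
      fin_cases r <;>
      simp only [isig, spec, pat, kind, ev, evs, List.map_cons, List.map_nil, xaSig,
        List.getD_cons_zero, List.getD_cons_succ, fmul3_inj, (hX _).eq_iff, if_true, true_and] <;>
      rfl
    · rcases clause_cases X hX i' (X i r) with
        ⟨h0, h1, h2⟩ | ⟨h0, h1, h2⟩ | ⟨h0, h1, h2⟩ | ⟨h0, h1, h2⟩ <;>
      simp only [isig, spec, pat, kind, ev, evs, List.map_cons, List.map_nil, xaSig,
        List.getD_cons_zero, List.getD_cons_succ, fmul3_inj, fmul4_inj, hij, false_and, and_false,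
        exists_false, if_false, if_true, h0, h1, h2] <;>
      rfl
  | _ =>
    simp only [isig, spec, pat, kind, ev, evs, List.map_cons, List.map_nil, xaSig,
      List.getD_cons_zero, List.getD_cons_succ]
    try split_ifs
    all_goals rfl

/-! ### The types of the special signatures -/

theorem mSig_mem {τ : Set Interaction} (hτ : Core τ) (e : GEvent V m) : mSig e ∈ τ := by
  obtain ⟨h1, h2, h3, h4⟩ := hτ
  cases e <;> simp only [mSig] <;> (try split_ifs) <;> assumption

theorem zSig_mem {τ : Set Interaction} (hτ : Core τ) (e : GEvent V m) : zSig e ∈ τ := by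
  obtain ⟨h1, h2, h3, h4⟩ := hτ
  cases e <;> assumption

theorem xSig_mem {τ : Set Interaction} (hτ : Core τ) (vv : V) (P : Fin (3 * m) → Bool)
    (e : GEvent V m) : xSig vv P e ∈ τ := by
  obtain ⟨h1, h2, h3, h4⟩ := hτ
  cases e <;> simp only [xSig] <;> (try split_ifs) <;> assumption

theorem xaSig_mem {τ : Set Interaction} (hτ : Core τ) (X : Fin m → Fin 3 → V) (i : Fin m)
    (r : Fin 3) (e : GEvent V m) : xaSig X i r e ∈ τ := by
  obtain ⟨h1, h2, h3, h4⟩ := hτ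
  cases e <;> simp only [xaSig] <;> (try split_ifs) <;> assumption

theorem kqSig_mem {τ : Set Interaction} (hτ : Core τ) (e : GEvent V m) : kqSig e ∈ τ := by
  obtain ⟨h1, h2, h3, h4⟩ := hτ
  cases e <;> simp only [kqSig] <;> (try split_ifs) <;> assumption

theorem kaSig_mem {τ : Set Interaction} (hτ : Core τ) (l : Fin (3 * m)) (e : GEvent V m) :
    kaSig l e ∈ τ := by
  obtain ⟨h1, h2, h3, h4⟩ := hτ
  cases e <;> simp only [kaSig] <;> (try split_ifs) <;> assumption

theorem kwSig_mem {τ : Set Interaction} (hτ : Core τ) (X : Fin m → Fin 3 → V) (j : Fin m)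
    (e : GEvent V m) : kwSig X j e ∈ τ := by
  obtain ⟨h1, h2, h3, h4⟩ := hτ
  cases e <;> simp only [kwSig] <;> (try split_ifs) <;> assumption

theorem modelSig_mem {τ : Set Interaction} (hτ : Core τ) (M : Set V) (e : GEvent V m) :
    modelSig M e ∈ τ := by
  obtain ⟨h1, h2, h3, h4⟩ := hτ
  cases e <;> simp only [modelSig] <;> (try split_ifs) <;> assumption

/-! ### The event/state separation property of the union -/

/-- The states of a shape at which `kqSig` inhibits `k`. -/
def kqZero : Kind → List ℕ
  | .H => [5]
  | .F0 => [8]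
  | .F1 => [2, 5]
  | .F2 => [2, 3, 4, 5, 6, 9]
  | .G => [2, 3, 4, 8]
  | .D => [2, 3, 4, 8]
  | .T0 => [4, 8, 12, 17]
  | .T1 => []

theorem kq_zero (X : Fin m → Fin 3 → V) (A : GIdx m) :
    solvable (zeroOn (kqZero (kind A))) (isig X kqSig A) = true := by
  cases A <;> rfl

/-- The states of a shape at which the signature of a model inhibits `k`. -/
def modelZero : Kind → List ℕ
  | .H => [2]
  | .F0 => [2, 5]
  | .T0 => [14]
  | _ => []

theorem model_zero (X : Fin m → Fin 3 → V) (M : Set V) (hM : OneInThree m X M) (A : GIdx m) :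
    solvable (zeroOn (modelZero (kind A))) (isig X (modelSig M) A) = true := by
  cases A with
  | T0 i =>
    rcases model_cases X M hM i with ⟨h0, h1, h2⟩ | ⟨h0, h1, h2⟩ | ⟨h0, h1, h2⟩ <;>
    simp only [isig, spec, pat, kind, ev, evs, List.map_cons, List.map_nil, modelSig,
      List.getD_cons_zero, List.getD_cons_succ, h0, h1, h2, if_true, if_false] <;> rfl
  | H | F0 =>
    simp only [isig, spec, pat, kind, ev, evs, List.map_cons, List.map_nil, modelSig,
      List.getD_cons_zero, List.getD_cons_succ]
    rfl
  | _ =>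
    have h0 : zeroOn [] = anyS := by funext t b; simp [zeroOn, anyS]
    change solvable (zeroOn []) _ = true
    rw [h0]
    exact modelSig_good X M hM _

theorem ka_zero (X : Fin m → Fin 3 → V) (i : Fin m) (r : Fin 3) :
    solvable (zeroOn [3 + 4 * r.val, 5 + 4 * r.val])
      (isig X (kaSig (fmul3 i r)) (.T0 i)) = true := by
  fin_cases r <;>
  simp only [isig, spec, pat, kind, ev, evs, List.map_cons, List.map_nil, kaSig,
    List.getD_cons_zero, List.getD_cons_succ, fmul3_inj, true_and] <;> rfl

theorem ka_zero_D (X : Fin m → Fin 3 → V) (l : Fin (3 * m)) :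
    solvable (zeroOn [5]) (isig X (kaSig l) (.D l)) = true := by
  simp only [isig, spec, pat, kind, ev, evs, List.map_cons, List.map_nil, kaSig,
    List.getD_cons_zero, List.getD_cons_succ, if_true]
  rfl

theorem kw_zero (X : Fin m → Fin 3 → V) (hX : ∀ i, Function.Injective (X i)) (i : Fin m) :
    solvable (zeroOn [2, 6, 10]) (isig X (kwSig X i) (.T0 i)) = true := by
  simp only [isig, spec, pat, kind, ev, evs, List.map_cons, List.map_nil, kwSig,
    List.getD_cons_zero, List.getD_cons_succ, fmul3_inj, (hX _).eq_iff, if_true, true_and]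
  rfl

theorem kw_zero_G (X : Fin m → Fin 3 → V) (j : Fin m) :
    solvable (zeroOn [5]) (isig X (kwSig X j) (.G j)) = true := by
  simp only [isig, spec, pat, kind, ev, evs, List.map_cons, List.map_nil, kwSig,
    List.getD_cons_zero, List.getD_cons_succ, if_true]
  rfl

theorem x_zero (X : Fin m → Fin 3 → V) (hX : ∀ i, Function.Injective (X i)) (i : Fin m)
    (P : Fin (3 * m) → Bool) (h0 : P (fmul3 i 0) = false) (h1 : P (fmul3 i 1) = false)
    (h2 : P (fmul3 i 2) = false) :
    solvable (zeroOn [6, 10, 14]) (isig X (xSig (X i 0) P) (.T0 i)) = true := by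
  simp only [isig, spec, pat, kind, ev, evs, List.map_cons, List.map_nil, xSig,
    List.getD_cons_zero, List.getD_cons_succ, (hX _).eq_iff, h0, h1, h2]
  rfl

theorem x_zero_succ (X : Fin m → Fin 3 → V) (hX : ∀ i, Function.Injective (X i)) (i : Fin m)
    (r : Fin 2) :
    solvable (zeroOn (if r = 0 then [10, 14] else [14]))
      (isig X (xSig (X i r.succ) (fun l => decide (l = fmul3 i r.castSucc))) (.T0 i)) = true := by
  fin_cases r <;>
  simp only [isig, spec, pat, kind, ev, evs, List.map_cons, List.map_nil, xSig,
    List.getD_cons_zero, List.getD_cons_succ, (hX _).eq_iff, fmul3_inj, true_and] <;>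
  rfl

theorem xa_zero (X : Fin m → Fin 3 → V) (hX : ∀ i, Function.Injective (X i)) (i : Fin m)
    (r : Fin 3) :
    solvable (zeroOn ([2, 6, 10].take (r.val + 1))) (isig X (xaSig X i r) (.T0 i)) = true := by
  fin_cases r <;>
  simp only [isig, spec, pat, kind, ev, evs, List.map_cons, List.map_nil, xaSig,
    List.getD_cons_zero, List.getD_cons_succ, (hX _).eq_iff, fmul3_inj, true_and, if_true] <;>
  rfl

theorem xSig_good_none (X : Fin m → Fin 3 → V) (hX : ∀ i, Function.Injective (X i)) (vv : V)
    (B : GIdx m) : solvable anyS (isig X (xSig vv (fun _ => false)) B) = true :=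
  xSig_good X hX vv _ (fun _ _ _ _ _ => rfl) B

theorem xSig_good_succ (X : Fin m → Fin 3 → V) (hX : ∀ i, Function.Injective (X i)) (i : Fin m)
    (r : Fin 2) (B : GIdx m) :
    solvable anyS (isig X (xSig (X i r.succ) (fun l => decide (l = fmul3 i r.castSucc))) B)
      = true := by
  refine xSig_good X hX _ _ ?_ B
  intro i' r1 r2 h1 h2
  simp only [fmul3_inj, decide_eq_false_iff_not]
  rintro ⟨rfl, rfl⟩
  have := hX _ h1
  subst this
  exact absurd h2 (by simp)

/-- Inhibition of `k` at the states listed in `leftover`. The model is needed only for the states in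
`modelZero`, among them `h_{j,2}`. -/
theorem inhib_k {τ : Set Interaction} (hτ : Core τ) (X : Fin m → Fin 3 → V)
    (hX : ∀ i, Function.Injective (X i)) (M : Set V) (hM : OneInThree m X M) (A : GIdx m)
    (s : GS m A) (hs : val A s ∈ leftover (kind A) 0) :
    ∃ R : URegion τ (gadget m X true), (R.sig .k).apply (R.sup ⟨A, s⟩) = none := by
  by_cases hq : val A s ∈ kqZero (kind A)
  · exact inhib X kqSig (kqSig_mem hτ) (kqSig_good X) A _ (kq_zero X A) _ rfl s hq
  by_cases hz : val A s ∈ modelZero (kind A)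
  · exact inhib X (modelSig M) (modelSig_mem hτ M) (modelSig_good X M hM) A _
      (model_zero X M hM A) _ rfl s hz
  have hw := fun j A Z hA => inhib (τ := τ) X (kwSig X j) (kwSig_mem hτ X j) (kwSig_good X hX j)
    A Z hA .k rfl
  have ha := fun l A Z hA => inhib (τ := τ) X (kaSig l) (kaSig_mem hτ l) (kaSig_good X l)
    A Z hA .k rfl
  cases A with
  | G j =>
    refine hw j _ _ (kw_zero_G X j) s ?_
    generalize val (GIdx.G j) s = t at *
    simp [kind, kqZero, leftover, modelZero] at *
    omega
  | D l =>
    refine ha l _ _ (ka_zero_D X l) s ?_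
    generalize val (GIdx.D l) s = t at *
    simp [kind, kqZero, leftover, modelZero] at *
    omega
  | T0 i =>
    by_cases h1 : val (GIdx.T0 i) s ∈ [2, 6, 10]
    · exact hw i _ _ (kw_zero X hX i) s h1
    by_cases h2 : val (GIdx.T0 i) s ∈ [3 + 4 * (0 : Fin 3).val, 5 + 4 * (0 : Fin 3).val]
    · exact ha _ _ _ (ka_zero X i 0) s h2
    by_cases h3 : val (GIdx.T0 i) s ∈ [3 + 4 * (1 : Fin 3).val, 5 + 4 * (1 : Fin 3).val]
    · exact ha _ _ _ (ka_zero X i 1) s h3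
    refine ha _ _ _ (ka_zero X i 2) s ?_
    clear hw ha
    generalize val (GIdx.T0 i) s = t at *
    simp [kind, kqZero, leftover, modelZero] at *
    omega
  | _ =>
    exfalso
    clear hw ha
    generalize val _ s = t at *
    simp [kind, kqZero, leftover, modelZero] at *
    try omega

/-- Every pair listed in `leftover` is covered by one of the special signatures. -/
theorem inhib_leftover {τ : Set Interaction} (hτ : Core τ) (X : Fin m → Fin 3 → V)
    (hX : ∀ i, Function.Injective (X i)) (M : Set V) (hM : OneInThree m X M) (A : GIdx m)
    (c : ℕ) (s : GS m A) (hs : val A s ∈ leftover (kind A) c) :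
    ∃ R : URegion τ (gadget m X true), (R.sig (ev X A c)).apply (R.sup ⟨A, s⟩) = none := by
  have hxa := fun i r Z hA => inhib (τ := τ) X (xaSig X i r) (xaSig_mem hτ X i r)
    (xaSig_good X hX i r) (.T0 i) Z hA
  have hxs := fun i r Z hA => inhib (τ := τ) X _ (xSig_mem hτ (X i (Fin.succ r)) _)
    (xSig_good_succ X hX i r) (.T0 i) Z hA
  have hz := fun A Z hA => inhib (τ := τ) X zSig (zSig_mem hτ) (zSig_good X) A Z hA
  have hm := fun A Z hA => inhib (τ := τ) X mSig (mSig_mem hτ) (mSig_good X) A Z hA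
  have hk := inhib_k hτ X hX M hM A s
  cases A with
  | H j =>
    match c, hs with
    | 0, hs => exact hk hs
    | 1, hs => exact hm _ [0] rfl _ rfl s hs
  | F0 =>
    match c, hs with
    | 0, hs => exact hk hs
    | 1, hs => exact hm _ [0, 3] rfl _ rfl s hs
  | F1 =>
    match c, hs with
    | 0, hs => exact hk hs
  | F2 =>
    match c, hs with
    | 0, hs => exact hk hs
  | G j =>
    match c, hs with
    | 0, hs => exact hk hs
    | 3, hs => exact hz _ [1] rfl _ rfl s hs
  | D j =>
    match c, hs with
    | 0, hs => exact hk hs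
    | 3, hs => exact hz _ [1] rfl _ rfl s hs
  | T0 i =>
    match c, hs with
    | 0, hs => exact hk hs
    | 1, hs =>
      exact inhib X _ (xSig_mem hτ (X i 0) _) (xSig_good_none X hX _) (.T0 i) _
        (x_zero X hX i _ rfl rfl rfl) _ rfl s hs
    | 2, hs =>
      refine hxs i 0 _ (x_zero_succ X hX i 0) _ ?_ s hs
      simp [ev, evs, xSig]
    | 4, hs =>
      by_cases h2 : val (GIdx.T0 i) s ∈ [2]
      · refine hxa i 0 _ (xa_zero X hX i 0) _ ?_ s h2
        simp [ev, evs, xaSig, fmul3_inj]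
      · refine hxs i 1 _ (x_zero_succ X hX i 1) _ ?_ s ?_
        · simp [ev, evs, xSig]
        · simp [leftover, kind] at hs h2 ⊢
          omega
    | 6, hs =>
      refine hxa i 1 _ (xa_zero X hX i 1) _ ?_ s hs
      simp [ev, evs, xaSig, fmul3_inj]
    | 8, hs =>
      refine hxa i 2 _ (xa_zero X hX i 2) _ ?_ s hs
      simp [ev, evs, xaSig]
  | _ => exact absurd hs (by simp [leftover, kind])

theorem uessp_of_model {τ : Set Interaction} (hτ : Core τ) (X : Fin m → Fin 3 → V)
    (hX : ∀ i, Function.Injective (X i)) (M : Set V) (hM : OneInThree m X M) :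
    UESSP τ (gadget m X true) := by
  intro e A s h
  by_cases he : e ∈ evs X A
  · have hc : (evs X A).idxOf e < rk (kind A) := by
      rw [← length_evs X A]
      exact List.idxOf_lt_length_iff.mpr he
    have hev := idx_lt_eq X hX A _ hc rfl
    have hs := gadget_delta_none X A h
    rw [chainDelta_spec X hX] at hs
    rw [hev]
    by_cases hl : val A s ∈ leftover (kind A) ((evs X A).idxOf e)
    · exact inhib_leftover hτ X hX M hM A _ s hl
    · exact inhib_ns hτ X hX A _ hc s hs hl
  · exact inhib_foreign hτ X A e he s

/-! ### The state separation property of the union -/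

/-- The pairs of states of a shape at which the same events occur. -/
def twins : Kind → List (ℕ × ℕ)
  | .F0 => [(1, 4)]
  | .F2 => [(4, 5)]
  | .G => [(2, 4)]
  | .D => [(2, 4)]
  | .T0 => [(3, 5), (7, 9), (11, 13)]
  | _ => []

/-- Apart from twins, any two states of a shape are told apart by some event occurring at exactly one
of them. -/
theorem pat_sep (K : Kind) : ∀ t ≤ (pat K).length, ∀ t' < t, (t', t) ∉ twins K →
    ∃ c < rk K, (chainDelta (pat K) t c = none) ≠ (chainDelta (pat K) t' c = none) := by
  have h : ∀ t ≤ (pat K).length, ∀ t' < t, (t', t) ∉ twins K → (List.range (rk K)).any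
      (fun c => (chainDelta (pat K) t c).isNone != (chainDelta (pat K) t' c).isNone) = true := by
    cases K <;> decide +kernel
  intro t ht t' ht' hn
  obtain ⟨c, hc, hne⟩ := List.any_eq_true.mp (h t ht t' ht' hn)
  refine ⟨c, List.mem_range.mp hc, ?_⟩
  simp only [← Option.isNone_iff_eq_none]
  intro heq
  rw [bne_iff_ne] at hne
  exact hne (Bool.eq_iff_iff.mpr (iff_of_eq heq))

/-- The side condition that `t` and `t'` have the supports `false` and `true`. -/
def split2 (t t' : ℕ) : ℕ → Bool → Bool := fun j b => (j != t || !b) && (j != t' || b)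

theorem sep_of_split {τ : Set Interaction} (X : Fin m → Fin 3 → V) (sig : GEvent V m → Interaction)
    (hmem : ∀ e, sig e ∈ τ) (hgood : ∀ B, solvable anyS (isig X sig B) = true)
    (A : GIdx m) (s s' : GS m A)
    (hA : solvable (split2 (val A s) (val A s')) (isig X sig A) = true) :
    ∃ R : URegion τ (gadget m X true), R.sup ⟨A, s⟩ ≠ R.sup ⟨A, s'⟩ := by
  obtain ⟨R, -, h2⟩ := mkRegion X sig hmem hgood A _ hA
  refine ⟨R, ?_⟩
  have h3 := h2 s
  have h4 := h2 s'
  simp only [split2, Bool.and_eq_true, bne_self_eq_false, Bool.false_or, Bool.not_eq_true'] at h3 h4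
  rw [h3.1, h4.2]
  simp

theorem sep_twins {τ : Set Interaction} (hτ : Core τ) (X : Fin m → Fin 3 → V)
    (hX : ∀ i, Function.Injective (X i)) (A : GIdx m) (s s' : GS m A)
    (h : (val A s, val A s') ∈ twins (kind A)) :
    ∃ R : URegion τ (gadget m X true), R.sup ⟨A, s⟩ ≠ R.sup ⟨A, s'⟩ := by
  have hns := fun e f => sep_of_split (τ := τ) X (nsSig e f) (nsSig_mem hτ e f)
  have hz := sep_of_split (τ := τ) X zSig (zSig_mem hτ) (zSig_good X)
  have hx := fun vv => sep_of_split (τ := τ) X _ (xSig_mem hτ vv _) (xSig_good_none X hX vv)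
  cases A with
  | F0 =>
    refine hns (.q 1) (.q 0) (ns_good X hX (by simp [Compat])) _ s s' ?_
    generalize val _ s = t at *
    generalize val _ s' = t' at *
    simp [twins, kind] at h
    obtain ⟨rfl, rfl⟩ := h
    rfl
  | F2 =>
    refine hns (.q 3) (.q 1) (ns_good X hX (by simp [Compat])) _ s s' ?_
    generalize val _ s = t at *
    generalize val _ s' = t' at *
    simp [twins, kind] at h
    obtain ⟨rfl, rfl⟩ := h
    rfl
  | G j | D j =>
    refine hz _ s s' ?_
    generalize val _ s = t at *
    generalize val _ s' = t' at *
    simp [twins, kind] at h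
    obtain ⟨rfl, rfl⟩ := h
    rfl
  | T0 i =>
    have h' : ∃ r : Fin 3, val (.T0 i) s = 3 + 4 * r.val ∧ val (.T0 i) s' = 5 + 4 * r.val := by
      simp only [twins, kind, List.mem_cons, Prod.mk.injEq, List.not_mem_nil, or_false] at h
      rcases h with h | h | h
      exacts [⟨0, h⟩, ⟨1, h⟩, ⟨2, h⟩]
    obtain ⟨r, h1, h2⟩ := h'
    have hx' := hx (X i r) _ s' s
    refine (hx' ?_).imp fun R hR => hR.symm
    rw [h1, h2]
    fin_cases r <;>
    simp only [isig, spec, pat, kind, ev, evs, List.map_cons, List.map_nil, xSig,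
      List.getD_cons_zero, List.getD_cons_succ, (hX _).eq_iff] <;> rfl
  | _ => exact absurd h (by simp [twins, kind])

/-- Given the ESSP, two states can only fail to be separated if the same events occur at them, and
these pairs of states are separated by explicit regions. -/
theorem ussp_of_uessp {τ : Set Interaction} (hτ : Core τ) (X : Fin m → Fin 3 → V)
    (hX : ∀ i, Function.Injective (X i)) (hE : UESSP τ (gadget m X true)) :
    USSP τ (gadget m X true) := by
  have hnone : ∀ (A : GIdx m) (s : GS m A) c, c < rk (kind A) →
      ((gadget m X true A).delta s (ev X A c) = none ↔
        chainDelta (pat (kind A)) (val A s) c = none) := by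
    intro A s c hc
    have hsp := chainDelta_spec X hX A (val A s) (ev X A c)
    rw [idx_ev X hX A hc] at hsp
    rw [← hsp]
    refine ⟨gadget_delta_none X A, fun h => ?_⟩
    by_contra hne
    obtain ⟨s', hs'⟩ := Option.ne_none_iff_exists'.mp hne
    rw [gadget_delta_some X A hs'] at h
    exact absurd h (by simp)
  -- a region inhibiting an event at `s` separates `s` from every state at which it occurs
  have hsep : ∀ (A : GIdx m) (s s' : GS m A) (e : GEvent V m),
      (gadget m X true A).delta s e = none → (gadget m X true A).delta s' e ≠ none →
      ∃ R : URegion τ (gadget m X true), R.sup ⟨A, s⟩ ≠ R.sup ⟨A, s'⟩ := by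
    intro A s s' e h h'
    obtain ⟨R, hR⟩ := hE e A s h
    obtain ⟨t, ht⟩ := Option.ne_none_iff_exists'.mp h'
    refine ⟨R, fun heq => ?_⟩
    have := R.consistent A s' e t ht
    rw [← heq, hR] at this
    exact absurd this (by simp)
  have main : ∀ (A : GIdx m) (s s' : GS m A), val A s' < val A s →
      ∃ R : URegion τ (gadget m X true), R.sup ⟨A, s⟩ ≠ R.sup ⟨A, s'⟩ := by
    intro A s s' hlt
    by_cases htw : (val A s', val A s) ∈ twins (kind A)
    · exact (sep_twins hτ X hX A s' s htw).imp fun R hR => hR.symm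
    · obtain ⟨c, hc, hne⟩ := pat_sep (kind A) _ (val_le A s) _ hlt htw
      rw [← hnone A s c hc, ← hnone A s' c hc] at hne
      by_cases h : (gadget m X true A).delta s (ev X A c) = none
      · refine hsep A s s' _ h fun h' => hne (by simp [h, h'])
      · refine (hsep A s' s (ev X A c) ?_ h).imp fun R hR => hR.symm
        by_contra h'
        exact hne (by simp [h, h'])
  intro A s s' hne
  rcases Nat.lt_trichotomy (val A s) (val A s') with h | h | h
  · exact (main A s' s h).imp fun R hR => hR.symm
  · exact absurd (val_inj A s s' h) hne
  · exact main A s s' h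

/-! ### From an inhibiting region to a one-in-three model -/

theorem pat_delta (K : Kind) : ∀ j < (pat K).length, ∀ p ∈ (pat K)[j]?,
    (p.2.allowsFwd = true → chainDelta (pat K) j p.1 = some (j + 1)) ∧
    (p.2.allowsBwd = true → chainDelta (pat K) (j + 1) p.1 = some j) := by
  cases K <;> decide +kernel

theorem gadget_delta_of_chainDelta (X : Fin m → Fin 3 → V) (A : GIdx m) {s s' : GS m A}
    {e : GEvent V m} (h : chainDelta (spec X A) (val A s) e = some (val A s')) :
    (gadget m X true A).delta s e = some s' := by
  cases hd : (gadget m X true A).delta s e with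
  | none => rw [gadget_delta_none X A hd] at h; exact absurd h (by simp)
  | some t =>
    rw [gadget_delta_some X A hd] at h
    rw [val_inj A t s' (by simpa using h)]

/-- A consistent support of a gadget, read as a function of the position in the chain, satisfies
the edge conditions. -/
theorem edges_of_consistent (X : Fin m → Fin 3 → V) (hX : ∀ i, Function.Injective (X i))
    (sig : GEvent V m → Interaction) (A : GIdx m) (sup : GS m A → Bool)
    (hsup : ∀ s e s', (gadget m X true A).delta s e = some s' →
      (sig e).apply (sup s) = some (sup s')) :
    ∃ f : ℕ → Bool, (∀ s, f (val A s) = sup s) ∧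
      ∀ j c d, (pat (kind A))[j]? = some (c, d) →
        edgeOK (sig (ev X A c)) d (f j) (f (j + 1)) = true := by
  choose g hg using val_surj A
  refine ⟨fun t => if h : t ≤ (pat (kind A)).length then sup (g t h) else false, ?_, ?_⟩
  · intro s
    simp only [val_le A s, dif_pos]
    exact congrArg sup (val_inj A _ _ (hg _ _))
  · intro j c d hj
    have hlt : j < (pat (kind A)).length := (List.getElem?_eq_some_iff.mp hj).1
    have hc := pat_lt (kind A) _ (List.mem_of_getElem? hj)
    have hp := pat_delta (kind A) j hlt (c, d) hj
    have hsp := fun t => chainDelta_spec X hX A t (ev X A c)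
    simp only [idx_ev X hX A hc] at hsp
    simp only [hlt.le, Nat.succ_le_of_lt hlt, dif_pos, edgeOK, Bool.and_eq_true, Bool.or_eq_true,
      Bool.not_eq_true', decide_eq_true_eq]
    constructor
    · cases hd : d.allowsFwd
      · exact Or.inl rfl
      · refine Or.inr (hsup _ _ _ (gadget_delta_of_chainDelta X A ?_))
        rw [hg, hg, hsp]
        exact hp.1 hd
    · cases hd : d.allowsBwd
      · exact Or.inl rfl
      · refine Or.inr (hsup _ _ _ (gadget_delta_of_chainDelta X A ?_))
        rw [hg, hg, hsp]
        exact hp.2 hd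

/-- If `i` is undefined at `!K`, both ends of an edge in both directions have support `K`. -/
theorem edge_partial {i : Interaction} {K b b' : Bool} (h : i.apply (!K) = none)
    (he : edgeOK i .both b b' = true) : b = K ∧ b' = K := by
  cases i <;> cases K <;> cases b <;> cases b' <;>
    first
    | exact ⟨rfl, rfl⟩
    | exact absurd h (by decide)
    | exact absurd he (by decide)

theorem edge_swap {b b' : Bool} (he : edgeOK .swap .both b b' = true) : b' = !b := by
  cases b <;> cases b' <;> first | rfl | exact absurd he (by decide)

theorem edge_eq {i : Interaction} {b b' : Bool} (hi : i ≠ .swap)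
    (he : edgeOK i .both b b' = true) : b = b' := by
  cases i <;> cases b <;> cases b' <;>
    first | rfl | exact absurd rfl hi | exact absurd he (by decide)

theorem swap_of_edge {i : Interaction} {b : Bool} (he : edgeOK i .both (!b) b = true) :
    i = .swap := by
  cases i <;> cases b <;> first | rfl | exact absurd he (by decide)

theorem swap_of_edge' {i : Interaction} {b : Bool} (he : edgeOK i .both b (!b) = true) :
    i = .swap := by
  cases i <;> cases b <;> first | rfl | exact absurd he (by decide)

theorem not_swap_of_edge {i : Interaction} {b : Bool} (he : edgeOK i .both b b = true) :
    i ≠ .swap := by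
  rintro rfl
  cases b <;> exact absurd he (by decide)

/-- The interaction `i` sends both values to `K`. -/
def IsConst (i : Interaction) (K : Bool) : Prop := i.apply K = some K ∧ i.apply (!K) = some K

theorem edge_const {i : Interaction} {K b b' : Bool} (h : IsConst i K)
    (he : edgeOK i .both b b' = true) : b = K ∧ b' = K := by
  obtain ⟨h1, h2⟩ := h
  cases i <;> cases K <;> cases b <;> cases b' <;>
    first
    | exact ⟨rfl, rfl⟩
    | exact absurd h1 (by decide)
    | exact absurd h2 (by decide)
    | exact absurd he (by decide)

/-- The two `x`-edges of a block of `T_{i,0}`, entered with support `K`, are left with support `K`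
unless `x` is constant `K`. -/
theorem block {i : Interaction} {K b c : Bool} (h1 : edgeOK i .both K b = true)
    (h2 : edgeOK i .bwd b c = true) : c = K ∨ IsConst i K := by
  unfold IsConst
  cases i <;> cases K <;> cases b <;> cases c <;>
    first
    | exact Or.inl rfl
    | exact Or.inr ⟨rfl, rfl⟩
    | exact absurd h1 (by decide)
    | exact absurd h2 (by decide)

theorem z_interaction {i : Interaction} {b c : Bool} (h1 : edgeOK i .both (!b) c = true)
    (h2 : edgeOK i .both (!c) b = true) : i = .nop ∨ i = .swap := by
  cases i <;> cases b <;> cases c <;>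
    first
    | exact Or.inl rfl
    | exact Or.inr rfl
    | exact absurd h1 (by decide)
    | exact absurd h2 (by decide)

/-- The `z`-path of `G_j` and `D_l` has ends of equal support as soon as `z` is `nop` or `swap`. -/
theorem z_path {i : Interaction} {b c d : Bool} (hi : i = .nop ∨ i = .swap)
    (h1 : edgeOK i .fwd b c = true) (h2 : edgeOK i .both c d = true) : b = d := by
  rcases hi with rfl | rfl <;> cases b <;> cases c <;> cases d <;>
    first
    | rfl
    | exact absurd h1 (by decide)
    | exact absurd h2 (by decide)

theorem same_event {i : Interaction} {a b c d : Bool} (h1 : edgeOK i .both a b = true)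
    (h2 : edgeOK i .both c d = true) (h : b = c) : a = d := by
  subst h
  cases i <;> cases a <;> cases b <;> cases d <;>
    first
    | rfl
    | exact absurd h1 (by decide)
    | exact absurd h2 (by decide)

/-- A signature inhibiting `k` at `h_{0,2}` yields a one-in-three model, namely the set of variables
whose event is constant with value `K`, where `K` is the only value at which `sig k` is defined.
Membership of the signature in a type `τ` plays no role. -/
theorem model_of_region (hm : 0 < m) (X : Fin m → Fin 3 → V)
    (hX : ∀ i, Function.Injective (X i)) (sig : GEvent V m → Interaction)
    (hsup : ∀ A, ∃ sup : GS m A → Bool, ∀ s e s', (gadget m X true A).delta s e = some s' →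
      (sig e).apply (sup s) = some (sup s'))
    (sup0 : GS m (.H (hidx hm)) → Bool)
    (hsup0 : ∀ s e s', (gadget m X true (.H (hidx hm))).delta s e = some s' →
      (sig e).apply (sup0 s) = some (sup0 s'))
    (hinh : (sig .k).apply (sup0 (2 : Fin 6)) = none) :
    ∃ M : Set V, OneInThree m X M := by
  have hE : ∀ A, ∃ f : ℕ → Bool, ∀ j c d, (pat (kind A))[j]? = some (c, d) →
      edgeOK (sig (ev X A c)) d (f j) (f (j + 1)) = true := by
    intro A
    obtain ⟨sup, h⟩ := hsup A
    obtain ⟨f, -, hf⟩ := edges_of_consistent X hX sig A sup h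
    exact ⟨f, hf⟩
  -- `K` is the value at which `k` is defined
  obtain ⟨K, hK⟩ : ∃ K, (!K) = sup0 (2 : Fin 6) := ⟨!(sup0 (2 : Fin 6)), Bool.not_not _⟩
  rw [← hK] at hinh
  have hm_swap : sig .mev = .swap := by
    obtain ⟨f, hf0, hf⟩ := edges_of_consistent X hX sig _ sup0 hsup0
    have h2 : f 2 = !K := by rw [hK]; exact hf0 (2 : Fin 6)
    have h0 := (edge_partial hinh (hf 0 0 .both rfl)).2
    have h1 := hf 1 1 .both rfl
    rw [show f (1 + 1) = !K from h2, h0] at h1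
    exact swap_of_edge' h1
  have hv_swap : ∀ j, sig (.v j) = .swap := by
    intro j
    obtain ⟨f, hf⟩ := hE (.H j)
    have h0 := (edge_partial hinh (hf 0 0 .both rfl)).2
    have h1 : edgeOK (sig .mev) .both (f 1) (f 2) = true := hf 1 1 .both rfl
    have h2 : edgeOK (sig (.v j)) .both (f 2) (f 3) = true := hf 2 2 .both rfl
    have h3 := (edge_partial hinh (hf 3 0 .both rfl)).1
    rw [hm_swap] at h1
    rw [edge_swap h1, h0, h3] at h2
    exact swap_of_edge h2
  have hq : sig (.q 0) = .swap ∧ sig (.q 1) = .swap := by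
    obtain ⟨f, hf⟩ := hE .F0
    have h0 := (edge_partial hinh (hf 0 0 .both rfl)).2
    have h1 : edgeOK (sig .mev) .both (f 1) (f 2) = true := hf 1 1 .both rfl
    have h2 : edgeOK (sig (.q 0)) .both (f 2) (f 3) = true := hf 2 2 .both rfl
    have h3 := edge_partial hinh (hf 3 0 .both rfl)
    have h4 : edgeOK (sig .mev) .both (f 4) (f 5) = true := hf 4 1 .both rfl
    have h5 : edgeOK (sig (.q 1)) .both (f 5) (f 6) = true := hf 5 3 .both rfl
    have h6 := (edge_partial hinh (hf 6 0 .both rfl)).1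
    rw [hm_swap] at h1 h4
    rw [edge_swap h1, h0, h3.1] at h2
    rw [edge_swap h4, h3.2, h6] at h5
    exact ⟨swap_of_edge h2, swap_of_edge h5⟩
  have hq23 : sig (.q 2) = .swap ↔ sig (.q 3) = .swap := by
    obtain ⟨f, hf⟩ := hE .F1
    have h0 := (edge_partial hinh (hf 0 0 .both rfl)).2
    have h1 : edgeOK (sig (.q 2)) .both (f 1) (f 2) = true := hf 1 1 .both rfl
    have h2 : edgeOK (sig (.q 3)) .both (f 2) (f 3) = true := hf 2 2 .both rfl
    have h3 := (edge_partial hinh (hf 3 0 .both rfl)).1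
    rw [h0] at h1
    rw [h3] at h2
    by_cases hb : f 2 = K
    · rw [hb] at h1 h2
      exact iff_of_false (not_swap_of_edge h1) (not_swap_of_edge h2)
    · have hb' : f 2 = !K := Bool.eq_not.mpr hb
      rw [hb'] at h1 h2
      exact iff_of_true (swap_of_edge' h1) (swap_of_edge h2)
  have hz : sig .z = .nop ∨ sig .z = .swap := by
    obtain ⟨f, hf⟩ := hE .F2
    have h0 := (edge_partial hinh (hf 0 0 .both rfl)).2
    have h1 : edgeOK (sig (.q 2)) .both (f 1) (f 2) = true := hf 1 1 .both rfl
    have h2 : edgeOK (sig (.q 0)) .both (f 2) (f 3) = true := hf 2 2 .both rfl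
    have h3 : edgeOK (sig .z) .both (f 3) (f 4) = true := hf 3 3 .both rfl
    have h4 : edgeOK (sig (.q 1)) .both (f 4) (f 5) = true := hf 4 4 .both rfl
    have h5 : edgeOK (sig .z) .both (f 5) (f 6) = true := hf 5 3 .both rfl
    have h6 : edgeOK (sig (.q 3)) .both (f 6) (f 7) = true := hf 6 5 .both rfl
    have h7 := (edge_partial hinh (hf 7 0 .both rfl)).1
    rw [h0] at h1
    rw [h7] at h6
    have h26 : f 6 = f 2 := by
      by_cases hs : sig (.q 2) = .swap
      · have hs' := hq23.mp hs
        rw [hs] at h1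
        rw [hs'] at h6
        rw [edge_swap h1, edge_swap h6, Bool.not_not]
      · rw [← edge_eq hs h1, edge_eq (fun h => hs (hq23.mpr h)) h6]
    rw [hq.1] at h2
    rw [hq.2] at h4
    rw [edge_swap h2] at h3
    rw [edge_swap h4, h26] at h5
    exact z_interaction h3 h5
  have hw : ∀ j, sig (.w j) ≠ .swap := by
    intro j
    obtain ⟨f, hf⟩ := hE (.G j)
    have h0 := (edge_partial hinh (hf 0 0 .both rfl)).2
    have h1 : f 2 = f 4 := z_path hz (hf 2 2 .fwd rfl) (hf 3 2 .both rfl)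
    have h2 : f 1 = f 5 := same_event (hf 1 1 .both rfl) (hf 4 1 .both rfl) h1
    have h5 : edgeOK (sig (.w j)) .both (f 5) (f 6) = true := hf 5 3 .both rfl
    have h6 := (edge_partial hinh (hf 6 0 .both rfl)).1
    rw [← h2, h0, h6] at h5
    exact not_swap_of_edge h5
  have ha : ∀ l, sig (.a l) ≠ .swap := by
    intro l
    obtain ⟨f, hf⟩ := hE (.D l)
    have h0 := (edge_partial hinh (hf 0 0 .both rfl)).2
    have h1 : f 2 = f 4 := z_path hz (hf 2 2 .fwd rfl) (hf 3 2 .both rfl)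
    have h2 : f 1 = f 5 := same_event (hf 1 1 .both rfl) (hf 4 1 .both rfl) h1
    have h5 : edgeOK (sig (.a l)) .both (f 5) (f 6) = true := hf 5 3 .both rfl
    have h6 := (edge_partial hinh (hf 6 0 .both rfl)).1
    rw [← h2, h0, h6] at h5
    exact not_swap_of_edge h5
  -- a path `x, v, x'` with `v` swapped: not both of `x`, `x'` are constant
  have hexcl : ∀ (j : Fin (4 * m)) (x x' : Interaction) (f : ℕ → Bool),
      edgeOK x .both (f 0) (f 1) = true → edgeOK (sig (.v j)) .both (f 1) (f 2) = true →
      edgeOK x' .both (f 2) (f 3) = true → IsConst x K → IsConst x' K → False := by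
    intro j x x' f h0 h1 h2 hx hx'
    rw [hv_swap, (edge_const hx h0).2, (edge_const hx' h2).1] at h1
    exact not_swap_of_edge h1 rfl
  have hex : ∀ i, ∃ r : Fin 3, IsConst (sig (.x (X i r))) K := by
    intro i
    obtain ⟨f, hf⟩ := hE (.T0 i)
    have t1 := (edge_partial hinh (hf 0 0 .both rfl)).2
    have t2 := edge_eq (hw i) (hf 1 1 .both rfl)
    have t3 := edge_eq (ha (fmul3 i 0)) (hf 2 2 .both rfl)
    have h3 : edgeOK (sig (.x (X i 0))) .both (f 3) (f 4) = true := hf 3 3 .both rfl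
    have h4 : edgeOK (sig (.x (X i 0))) .bwd (f 4) (f 5) = true := hf 4 3 .bwd rfl
    have t6 := edge_eq (ha (fmul3 i 0)) (hf 5 2 .both rfl)
    have t7 := edge_eq (ha (fmul3 i 1)) (hf 6 4 .both rfl)
    have h7 : edgeOK (sig (.x (X i 1))) .both (f 7) (f 8) = true := hf 7 5 .both rfl
    have h8 : edgeOK (sig (.x (X i 1))) .bwd (f 8) (f 9) = true := hf 8 5 .bwd rfl
    have t10 := edge_eq (ha (fmul3 i 1)) (hf 9 4 .both rfl)
    have t11 := edge_eq (ha (fmul3 i 2)) (hf 10 6 .both rfl)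
    have h11 : edgeOK (sig (.x (X i 2))) .both (f 11) (f 12) = true := hf 11 7 .both rfl
    have h12 : edgeOK (sig (.x (X i 2))) .bwd (f 12) (f 13) = true := hf 12 7 .bwd rfl
    have t14 := edge_eq (ha (fmul3 i 2)) (hf 13 6 .both rfl)
    have h14 : edgeOK (sig (.v (fmul4 i 0))) .both (f 14) (f 15) = true := hf 14 8 .both rfl
    have t15 := (edge_partial hinh (hf 15 0 .both rfl)).1
    simp only [Nat.reduceAdd] at t1 t2 t3 t6 t7 t10 t11 t14
    rw [← t3, ← t2, t1] at h3
    rcases block h3 h4 with h | h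
    · rw [← t7, ← t6, h] at h7
      rcases block h7 h8 with h | h
      · rw [← t11, ← t10, h] at h11
        rcases block h11 h12 with h | h
        · rw [hv_swap, ← t14, h, t15] at h14
          exact absurd rfl (not_swap_of_edge h14)
        · exact ⟨2, h⟩
      · exact ⟨1, h⟩
    · exact ⟨0, h⟩
  refine ⟨{vv | IsConst (sig (.x vv)) K}, fun i => ?_⟩
  have h01 : IsConst (sig (.x (X i 0))) K → IsConst (sig (.x (X i 1))) K → False := by
    obtain ⟨f, hf⟩ := hE (.T1 i)
    exact hexcl _ _ _ f (hf 0 0 .both rfl) (hf 1 1 .both rfl) (hf 2 2 .both rfl)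
  have h02 : IsConst (sig (.x (X i 0))) K → IsConst (sig (.x (X i 2))) K → False := by
    obtain ⟨f, hf⟩ := hE (.T2 i)
    exact hexcl _ _ _ f (hf 0 0 .both rfl) (hf 1 1 .both rfl) (hf 2 2 .both rfl)
  have h12 : IsConst (sig (.x (X i 1))) K → IsConst (sig (.x (X i 2))) K → False := by
    obtain ⟨f, hf⟩ := hE (.T3 i)
    exact hexcl _ _ _ f (hf 0 0 .both rfl) (hf 1 1 .both rfl) (hf 2 2 .both rfl)
  obtain ⟨r, hr⟩ := hex i
  refine ⟨r, hr, fun r' hr' => ?_⟩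
  simp only [Set.mem_ofPred_eq] at hr'
  fin_cases r <;> fin_cases r' <;>
    first
    | rfl
    | exact (h01 hr hr').elim
    | exact (h01 hr' hr).elim
    | exact (h02 hr hr').elim
    | exact (h02 hr' hr).elim
    | exact (h12 hr hr').elim
    | exact (h12 hr' hr).elim

end Gadgets

/-! ### Regions of the joining -/

/-- The edge conditions on the connectors of the `j`-th component: `bot` is the support on the
states `⊥_t`, `a₁`, `a₂`, `a₃` are the supports of `⊤_{j,1}`, `⊤_{j,2}`, `⊤_{j,3}`, `g` is the
support of the initial state of the component, and `o`, `x`, `n`, `p` are the signatures of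
`⊙_j`, `⊗_j`, `⊖_j`, `⊕_j`. -/
def JCond (bot : ℕ → Bool) (a₁ a₂ a₃ g : Bool) (o x n p : Interaction) (j : ℕ) : Prop :=
  edgeOK x .both (bot (4 * j)) (bot (4 * j + 1)) = true ∧
  edgeOK x .both (bot (4 * j + 3)) (bot (4 * j + 4)) = true ∧
  edgeOK o .fwd (bot (4 * j + 1)) (bot (4 * j + 2)) = true ∧
  edgeOK o .both (bot (4 * j + 2)) (bot (4 * j + 3)) = true ∧
  edgeOK o .both a₂ a₃ = true ∧
  edgeOK n .fwd (bot (4 * j + 2)) a₁ = true ∧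
  edgeOK n .both a₁ a₂ = true ∧
  edgeOK p .both a₃ g = true

theorem edge_both {i : Interaction} {b b' : Bool} (h : edgeOK i .both b b' = true) :
    i.apply b = some b' ∧ i.apply b' = some b := by
  simpa [edgeOK, Dir.allowsFwd, Dir.allowsBwd] using h

theorem edge_fwd {i : Interaction} {b b' : Bool} (h : edgeOK i .fwd b b' = true) :
    i.apply b = some b' := by
  simpa [edgeOK, Dir.allowsFwd, Dir.allowsBwd] using h

section Joining

variable {n : ℕ} {S : Fin n → Type} {E : Type}

/-- A region of the union, together with supports and signatures on the connectors satisfying `JCond`,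
is a region of the joining. -/
theorem joining_region {τ : Set Interaction} (U : Union (Fin n) S E) (R : URegion τ U)
    (bot a₁ a₂ a₃ : ℕ → Bool) (o x ng p : ℕ → Interaction)
    (ho : ∀ j, o j ∈ τ) (hx : ∀ j, x j ∈ τ) (hng : ∀ j, ng j ∈ τ) (hp : ∀ j, p j ∈ τ)
    (h : ∀ j : Fin n, JCond bot (a₁ j) (a₂ j) (a₃ j) (R.sup ⟨j, (U j).init⟩)
      (o j) (x j) (ng j) (p j) j) :
    ∃ R' : Region τ (joining U), (∀ s, R'.sup (.inl s) = R.sup s) ∧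
      (∀ t, R'.sup (.inr (.inl t)) = bot t) ∧
      (∀ j k, R'.sup (.inr (.inr (j, k))) = ![a₁ j, a₂ j, a₃ j] k) ∧
      (∀ e, R'.sig (.inl e) = R.sig e) ∧
      ∀ j k, R'.sig (.inr (j, k)) = ![o j, x j, ng j, p j] k := by
  refine ⟨⟨fun st => match st with
      | .inl s => R.sup s
      | .inr (.inl t) => bot t
      | .inr (.inr (j, k)) => ![a₁ j, a₂ j, a₃ j] k,
    fun ev => match ev with
      | .inl e => R.sig e
      | .inr (j, k) => ![o j, x j, ng j, p j] k, ?_, ?_⟩,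
    fun _ => rfl, fun _ => rfl, fun _ _ => rfl, fun _ => rfl, fun _ _ => rfl⟩
  · rintro (e | ⟨j, k⟩)
    · exact R.sig_mem e
    · fin_cases k
      exacts [ho j, hx j, hng j, hp j]
  · rintro (⟨i, s⟩ | t | ⟨i, k⟩) (e | ⟨j, c⟩) st' hd
    · simp only [joining, Option.map_eq_some_iff] at hd
      obtain ⟨s', hs', rfl⟩ := hd
      exact R.consistent i s e s' hs'
    · simp only [joining] at hd
      split_ifs at hd with hc
      obtain ⟨rfl, rfl, rfl⟩ := hc
      obtain rfl := Option.some.inj hd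
      exact (edge_both (h i).2.2.2.2.2.2.2).2
    · exact absurd hd (by simp [joining])
    · obtain ⟨h1, h2, h3, h4, h5, h6, h7, h8⟩ := h j
      simp only [joining] at hd
      split_ifs at hd with c1 c2 c3 c4 c5 c6 c7 c8 c9 c10 c11 <;>
        obtain rfl := Option.some.inj hd <;> subst c <;> dsimp only
      · rw [c2]; exact (edge_both h1).1
      · rw [c3]; exact (edge_both h1).2
      · rw [c4]; exact (edge_both h2).1
      · rw [c5]; exact (edge_both h2).2
      · rw [c7]; exact edge_fwd h3
      · rw [c8]; exact (edge_both h4).1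
      · rw [c9]; exact (edge_both h4).2
      · rw [c11]; exact edge_fwd h6
    · exact absurd hd (by simp [joining])
    · obtain ⟨h1, h2, h3, h4, h5, h6, h7, h8⟩ := h j
      simp only [joining] at hd
      split_ifs at hd with c1 c2 c3 c4 c5 c6 c7 c8 c9 <;>
        obtain rfl := Option.some.inj hd <;> subst c1 <;> subst c <;> subst k <;> dsimp only
      · exact (edge_both h7).1
      · exact (edge_both h7).2
      · exact (edge_both h5).1
      · exact (edge_both h5).2
      · exact (edge_both h8).1

/-- The region of a union that is constant on every component. -/
def constR {τ : Set Interaction} (hτ : Core τ) (U : Union (Fin n) S E) (g : ℕ → Bool) :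
    URegion τ U where
  sup := fun s => g s.1
  sig := fun _ => .nop
  sig_mem := fun _ => hτ.1
  consistent := fun _ _ _ _ _ => rfl

end Joining

/-! ### Families of regions of the joining -/

section Families

variable {n : ℕ} {S : Fin n → Type} {E : Type} {τ : Set Interaction}

/-- Every region of the union extends to the joining: the connectors get constant support and `⊕_j`
is swapped where the initial state demands it. -/
theorem reg_ext (hτ : Core τ) (U : Union (Fin n) S E) (R : URegion τ U) :
    ∃ R' : Region τ (joining U), (∀ s, R'.sup (.inl s) = R.sup s) ∧
      ∀ e, R'.sig (.inl e) = R.sig e := by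
  obtain ⟨h1, h2, h3, h4⟩ := hτ
  obtain ⟨R', r1, r2, r3, r4, r5⟩ := joining_region U R (fun _ => true) (fun _ => true)
    (fun _ => true) (fun _ => true) (fun _ => .nop) (fun _ => .nop) (fun _ => .nop)
    (fun j => if h : j < n then if R.sup ⟨⟨j, h⟩, (U ⟨j, h⟩).init⟩ = true then .nop else .swap
      else .nop)
    (fun _ => h1) (fun _ => h1) (fun _ => h1)
    (by intro j; split_ifs <;> assumption)
    (by
      intro j
      refine ⟨rfl, rfl, rfl, rfl, rfl, rfl, rfl, ?_⟩
      simp only [j.isLt, dif_pos]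
      cases R.sup ⟨j, (U j).init⟩ <;> rfl)
  exact ⟨R', r1, r4⟩

/-- Support exactly the union, all events of the union used. -/
theorem reg_union (hτ : Core τ) (U : Union (Fin n) S E) :
    ∃ R : Region τ (joining U), (∀ s, R.sup (.inl s) = true) ∧ (∀ q, R.sup (.inr q) = false) ∧
      ∀ e, R.sig (.inl e) = .used := by
  obtain ⟨h1, h2, h3, h4⟩ := hτ
  obtain ⟨R', r1, r2, r3, r4, r5⟩ := joining_region U
    (⟨fun _ => true, fun _ => .used, fun _ => h4, fun _ _ _ _ _ => rfl⟩ : URegion τ U)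
    (fun _ => false) (fun _ => false) (fun _ => false) (fun _ => false) (fun _ => .nop)
    (fun _ => .nop) (fun _ => .nop) (fun _ => .swap)
    (fun _ => h1) (fun _ => h1) (fun _ => h1) (fun _ => h3)
    (by intro j; exact ⟨rfl, rfl, rfl, rfl, rfl, rfl, rfl, rfl⟩)
  refine ⟨R', r1, ?_, r4⟩
  rintro (t | ⟨j, k⟩)
  · exact r2 t
  · rw [r3]
    fin_cases k <;> rfl

/-- Support exactly `⊥_{4i+2}`, `⊤_{i,1}`, `⊤_{i,2}`, with `⊖_i` used. -/
theorem reg_eta (hτ : Core τ) (U : Union (Fin n) S E) (i : Fin n) :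
    ∃ R : Region τ (joining U), (∀ s, R.sup (.inl s) = false) ∧
      (∀ t, R.sup (.inr (.inl t)) = if t.val = 4 * i + 2 then true else false) ∧
      (∀ j k, R.sup (.inr (.inr (j, k))) = if j = i then ![true, true, false] k else false) ∧
      R.sig (.inr (i, 2)) = .used := by
  obtain ⟨h1, h2, h3, h4⟩ := hτ
  obtain ⟨R', r1, r2, r3, r4, r5⟩ := joining_region U
    (constR ⟨h1, h2, h3, h4⟩ U (fun _ => false)) (fun t => if t = 4 * i + 2 then true else false)
    (fun j => if j = i then true else false) (fun j => if j = i then true else false)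
    (fun _ => false)
    (fun j => if j = i then .swap else .nop) (fun _ => .nop)
    (fun j => if j = i then .used else .nop) (fun _ => .nop)
    (by intro j; split_ifs <;> assumption)
    (fun _ => h1)
    (by intro j; split_ifs <;> assumption)
    (fun _ => h1)
    (by
      intro j
      refine ⟨?_, ?_, ?_, ?_, ?_, ?_, ?_, ?_⟩ <;> (try dsimp only [constR]) <;> (try split_ifs) <;>
        first | rfl | omega)
  refine ⟨R', r1, r2, ?_, ?_⟩
  · intro j k
    rw [r3]
    simp only [Fin.ext_iff]
    fin_cases k <;> split_ifs <;> rfl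
  · rw [r5]
    exact if_pos rfl

/-- Support exactly `⊥_{4i+1}`, `⊥_{4i+2}`, `⊥_{4i+3}`, `⊤_{i,2}`, `⊤_{i,3}`, with `⊙_i` used. -/
theorem reg_zeta (hτ : Core τ) (U : Union (Fin n) S E) (i : Fin n) :
    ∃ R : Region τ (joining U), (∀ s, R.sup (.inl s) = false) ∧
      (∀ t, R.sup (.inr (.inl t)) =
        if 4 * i.val + 1 ≤ t.val ∧ t.val ≤ 4 * i + 3 then true else false) ∧
      (∀ j k, R.sup (.inr (.inr (j, k))) = if j = i then ![false, true, true] k else false) ∧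
      R.sig (.inr (i, 0)) = .used := by
  obtain ⟨h1, h2, h3, h4⟩ := hτ
  obtain ⟨R', r1, r2, r3, r4, r5⟩ := joining_region U
    (constR ⟨h1, h2, h3, h4⟩ U (fun _ => false))
    (fun t => if 4 * i.val + 1 ≤ t ∧ t ≤ 4 * i + 3 then true else false)
    (fun _ => false)
    (fun j => if j = i then true else false) (fun j => if j = i then true else false)
    (fun j => if j = i then .used else .nop)
    (fun j => if j = i then .swap else .nop)
    (fun j => if j = i then .swap else .nop)
    (fun j => if j = i then .swap else .nop)
    (by intro j; split_ifs <;> assumption)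
    (by intro j; split_ifs <;> assumption)
    (by intro j; split_ifs <;> assumption)
    (by intro j; split_ifs <;> assumption)
    (by
      intro j
      refine ⟨?_, ?_, ?_, ?_, ?_, ?_, ?_, ?_⟩ <;> (try dsimp only [constR]) <;> (try split_ifs) <;>
        first | rfl | omega)
  refine ⟨R', r1, r2, ?_, ?_⟩
  · intro j k
    rw [r3]
    simp only [Fin.ext_iff]
    fin_cases k <;> split_ifs <;> rfl
  · rw [r5]
    exact if_pos rfl

/-- Support exactly the states `⊤_{i,·}` and the `i`-th component, with `⊕_i` used. -/
theorem reg_theta (hτ : Core τ) (U : Union (Fin n) S E) (i : Fin n) :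
    ∃ R : Region τ (joining U), (∀ s, R.sup (.inl s) = if s.1.val = i then true else false) ∧
      (∀ t, R.sup (.inr (.inl t)) = false) ∧
      (∀ j k, R.sup (.inr (.inr (j, k))) = if j = i then true else false) ∧
      R.sig (.inr (i, 3)) = .used := by
  obtain ⟨h1, h2, h3, h4⟩ := hτ
  obtain ⟨R', r1, r2, r3, r4, r5⟩ := joining_region U
    (constR ⟨h1, h2, h3, h4⟩ U (fun j => if j = i then true else false))
    (fun _ => false)
    (fun j => if j = i then true else false) (fun j => if j = i then true else false)
    (fun j => if j = i then true else false)
    (fun _ => .nop) (fun _ => .nop)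
    (fun j => if j = i then .set else .nop)
    (fun j => if j = i then .used else .nop)
    (fun _ => h1) (fun _ => h1)
    (by intro j; split_ifs <;> assumption)
    (by intro j; split_ifs <;> assumption)
    (by
      intro j
      refine ⟨?_, ?_, ?_, ?_, ?_, ?_, ?_, ?_⟩ <;> (try dsimp only [constR]) <;> (try split_ifs) <;>
        rfl)
  refine ⟨R', r1, r2, ?_, ?_⟩
  · intro j k
    rw [r3]
    simp only [Fin.ext_iff]
    fin_cases k <;> split_ifs <;> rfl
  · rw [r5]
    exact if_pos rfl

/-- A region in which `⊕_i` is used and the support of `⊤_{i,1}` and `⊤_{i,2}` vanishes. -/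
theorem reg_theta' (hτ : Core τ) (U : Union (Fin n) S E) (i : Fin n) :
    ∃ R : Region τ (joining U), R.sup (.inr (.inr (i, 0))) = false ∧
      R.sup (.inr (.inr (i, 1))) = false ∧ R.sig (.inr (i, 3)) = .used := by
  obtain ⟨h1, h2, h3, h4⟩ := hτ
  obtain ⟨R', r1, r2, r3, r4, r5⟩ := joining_region U
    (constR ⟨h1, h2, h3, h4⟩ U (fun _ => true))
    (fun t => if t = 4 * i + 2 then false else true)
    (fun j => if j = i then false else true) (fun j => if j = i then false else true)
    (fun _ => true)
    (fun j => if j = i then .swap else .nop) (fun _ => .nop)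
    (fun _ => .nop) (fun _ => .used)
    (by intro j; split_ifs <;> assumption)
    (fun _ => h1) (fun _ => h1) (fun _ => h4)
    (by
      intro j
      refine ⟨?_, ?_, ?_, ?_, ?_, ?_, ?_, ?_⟩ <;> (try dsimp only [constR]) <;> (try split_ifs) <;>
        first | rfl | omega)
  refine ⟨R', ?_, ?_, ?_⟩
  · rw [r3]; exact if_pos rfl
  · rw [r3]; exact if_pos rfl
  · rw [r5]; rfl

/-- A region of the union with all initial states in its support extends to a region of the joining
in which every `⊕_j` is used. -/
theorem reg_init (hτ : Core τ) (U : Union (Fin n) S E) (R : URegion τ U)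
    (hR : ∀ j, R.sup ⟨j, (U j).init⟩ = true) :
    ∃ R' : Region τ (joining U), (∀ s, R'.sup (.inl s) = R.sup s) ∧
      ∀ j, R'.sig (.inr (j, 3)) = .used := by
  obtain ⟨h1, h2, h3, h4⟩ := hτ
  obtain ⟨R', r1, r2, r3, r4, r5⟩ := joining_region U R (fun _ => true) (fun _ => true)
    (fun _ => true) (fun _ => true) (fun _ => .nop) (fun _ => .nop) (fun _ => .nop)
    (fun _ => .used) (fun _ => h1) (fun _ => h1) (fun _ => h1) (fun _ => h4)
    (by
      intro j
      refine ⟨rfl, rfl, rfl, rfl, rfl, rfl, rfl, ?_⟩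
      rw [hR]
      rfl)
  exact ⟨R', r1, fun j => by rw [r5]; rfl⟩

/-- `⊗_i` used, support vanishing on the union, on `⊥_{4i+2}`, on the `⊥_t` with `4 ∤ t` other
than `⊥_{4i+1}`, `⊥_{4i+3}`, and on all `⊤_{j,k}` but `⊤_{i,3}`. -/
theorem reg_beta (hτ : Core τ) (U : Union (Fin n) S E) (i : Fin n) :
    ∃ R : Region τ (joining U), (∀ s, R.sup (.inl s) = false) ∧
      (∀ t, R.sup (.inr (.inl t)) =
        if t.val % 4 = 0 ∨ t.val = 4 * i + 1 ∨ t.val = 4 * i + 3 then true else false) ∧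
      (∀ j k, R.sup (.inr (.inr (j, k))) = if j = i then ![false, false, true] k else false) ∧
      R.sig (.inr (i, 1)) = .used := by
  obtain ⟨h1, h2, h3, h4⟩ := hτ
  obtain ⟨R', r1, r2, r3, r4, r5⟩ := joining_region U
    (constR ⟨h1, h2, h3, h4⟩ U (fun _ => false))
    (fun t => if t % 4 = 0 ∨ t = 4 * i + 1 ∨ t = 4 * i + 3 then true else false)
    (fun _ => false) (fun _ => false) (fun j => if j = i then true else false)
    (fun j => if j = i then .swap else .nop)
    (fun j => if j = i then .used else .swap)
    (fun _ => .nop)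
    (fun j => if j = i then .swap else .nop)
    (by intro j; split_ifs <;> assumption)
    (by intro j; split_ifs <;> assumption)
    (fun _ => h1)
    (by intro j; split_ifs <;> assumption)
    (by
      intro j
      refine ⟨?_, ?_, ?_, ?_, ?_, ?_, ?_, ?_⟩ <;> (try dsimp only [constR]) <;> (try split_ifs) <;>
        first | rfl | omega)
  refine ⟨R', r1, r2, ?_, ?_⟩
  · intro j k
    rw [r3]
    simp only [Fin.ext_iff]
    fin_cases k <;> split_ifs <;> rfl
  · rw [r5]
    exact if_pos rfl

/-- `⊗_i` used, support vanishing on `⊤_{i,3}`. -/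
theorem reg_gamma (hτ : Core τ) (U : Union (Fin n) S E) (i : Fin n) :
    ∃ R : Region τ (joining U), R.sup (.inr (.inr (i, 2))) = false ∧
      R.sig (.inr (i, 1)) = .used := by
  obtain ⟨h1, h2, h3, h4⟩ := hτ
  obtain ⟨R', r1, r2, r3, r4, r5⟩ := joining_region U
    (constR ⟨h1, h2, h3, h4⟩ U (fun j => if j = i then false else true))
    (fun t => if t = 4 * i + 2 then false else true)
    (fun _ => true) (fun _ => true) (fun j => if j = i then false else true)
    (fun j => if j = i then .swap else .nop)
    (fun _ => .used)
    (fun j => if j = i then .set else .nop)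
    (fun _ => .nop)
    (by intro j; split_ifs <;> assumption)
    (fun _ => h4)
    (by intro j; split_ifs <;> assumption)
    (fun _ => h1)
    (by
      intro j
      refine ⟨?_, ?_, ?_, ?_, ?_, ?_, ?_, ?_⟩ <;> (try dsimp only [constR]) <;> (try split_ifs) <;>
        first | rfl | omega)
  refine ⟨R', ?_, ?_⟩
  · rw [r3]
    exact if_pos rfl
  · rw [r5]
    rfl

/-- Support on `⊥_t` exactly for `4p + 2 ≤ t`, with `⊗_j` used for `p < j`. -/
theorem reg_delta (hτ : Core τ) (U : Union (Fin n) S E) (p : ℕ) :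
    ∃ R : Region τ (joining U),
      (∀ t, R.sup (.inr (.inl t)) = if 4 * p + 2 ≤ t.val then true else false) ∧
      ∀ j : Fin n, p < j.val → R.sig (.inr (j, 1)) = .used := by
  obtain ⟨h1, h2, h3, h4⟩ := hτ
  obtain ⟨R', r1, r2, r3, r4, r5⟩ := joining_region U
    (constR ⟨h1, h2, h3, h4⟩ U (fun j => if p ≤ j then true else false))
    (fun t => if 4 * p + 2 ≤ t then true else false)
    (fun j => if p ≤ j then true else false) (fun j => if p ≤ j then true else false)
    (fun j => if p ≤ j then true else false)
    (fun j => if j = p then .set else .nop)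
    (fun j => if p < j then .used else .nop)
    (fun _ => .nop)
    (fun _ => .nop)
    (by intro j; split_ifs <;> assumption)
    (by intro j; split_ifs <;> assumption)
    (fun _ => h1)
    (fun _ => h1)
    (by
      intro j
      refine ⟨?_, ?_, ?_, ?_, ?_, ?_, ?_, ?_⟩ <;> (try dsimp only [constR]) <;> (try split_ifs) <;>
        first | rfl | omega)
  refine ⟨R', r2, ?_⟩
  intro j hj
  rw [r5]
  exact if_pos hj

/-- `⊗_i` used, support vanishing on `⊥_t` for `4i + 8 ≤ t`. -/
theorem reg_eps (hτ : Core τ) (U : Union (Fin n) S E) (i : Fin n) :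
    ∃ R : Region τ (joining U),
      (∀ t, 4 * i.val + 8 ≤ t.val → R.sup (.inr (.inl t)) = false) ∧
      R.sig (.inr (i, 1)) = .used := by
  obtain ⟨h1, h2, h3, h4⟩ := hτ
  obtain ⟨R', r1, r2, r3, r4, r5⟩ := joining_region U
    (constR ⟨h1, h2, h3, h4⟩ U (fun j => if j ≤ i + 1 then true else false))
    (fun t => if t ≤ 4 * i + 4 ∨ t = 4 * i + 6 ∨ t = 4 * i + 7 then true else false)
    (fun j => if j ≤ i + 1 then true else false) (fun j => if j ≤ i + 1 then true else false)
    (fun j => if j ≤ i + 1 then true else false)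
    (fun j => if j = i + 1 then .set else .nop)
    (fun j => if j = i + 1 then .swap else if j = i then .used else .nop)
    (fun _ => .nop)
    (fun _ => .nop)
    (by intro j; split_ifs <;> assumption)
    (by intro j; split_ifs <;> assumption)
    (fun _ => h1)
    (fun _ => h1)
    (by
      intro j
      refine ⟨?_, ?_, ?_, ?_, ?_, ?_, ?_, ?_⟩ <;> (try dsimp only [constR]) <;> (try split_ifs) <;>
        first | rfl | omega)
  refine ⟨R', ?_, ?_⟩
  · intro t ht
    rw [r2]
    exact if_neg (by omega)
  · rw [r5]
    change (if i.val = i.val + 1 then Interaction.swap else if i.val = i.val then .used else .nop)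
      = _
    simp

end Families

/-! ### Separation in the joining -/

section Feasibility

variable {n : ℕ} {S : Fin n → Type} {E : Type} {τ : Set Interaction}

theorem used_false {i : Interaction} {b : Bool} (hi : i = .used) (hb : b = false) :
    i.apply b = none := by
  subst hi hb
  rfl

/-- The `τ`-ESSP passes from a union to its joining, provided the initial states of the components
form the support of a region. -/
theorem joining_essp (hτ : Core τ) (U : Union (Fin n) S E) (hE : UESSP τ U)
    (hI : ∃ R : URegion τ U, ∀ i s, R.sup ⟨i, s⟩ = true ↔ s = (U i).init) :
    ESSP τ (joining U) := by
  rintro st (e | ⟨i, c⟩) hd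
  · rcases st with ⟨j, s⟩ | q
    · simp only [joining, Option.map_eq_none_iff] at hd
      obtain ⟨R, hR⟩ := hE e j s hd
      obtain ⟨R', h1, h2⟩ := reg_ext hτ U R
      exact ⟨R', by rw [h1, h2]; exact hR⟩
    · obtain ⟨R, h1, h2, h3⟩ := reg_union hτ U
      exact ⟨R, used_false (h3 e) (h2 q)⟩
  · fin_cases c
    · -- `⊙_i`
      obtain ⟨R, h1, h2, h3, h4⟩ := reg_zeta hτ U i
      refine ⟨R, used_false h4 ?_⟩
      rcases st with s | t | ⟨j, k⟩
      · exact h1 s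
      · rw [h2]
        refine if_neg fun ht => ?_
        have : t.val = 4 * i.val + 1 ∨ t.val = 4 * i.val + 2 ∨ t.val = 4 * i.val + 3 := by omega
        rcases this with h | h | h <;> simp [joining, h] at hd
      · rw [h3]
        split_ifs with hj
        · subst hj
          fin_cases k
          · rfl
          all_goals simp [joining] at hd
        · rfl
    · -- `⊗_i`
      by_cases hg : st = .inr (.inr (i, 2))
      · subst hg
        obtain ⟨R, h1, h2⟩ := reg_gamma hτ U i
        exact ⟨R, used_false h2 h1⟩
      by_cases hb : ∃ t : Fin (4 * n + 1), st = .inr (.inl t) ∧ t.val % 4 = 0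
      · obtain ⟨t, rfl, ht⟩ := hb
        have h0 : t.val ≠ 4 * i.val := fun h => by simp [joining, h] at hd
        have h1 : t.val ≠ 4 * i.val + 4 := fun h => by simp [joining, h] at hd
        by_cases hlt : t.val < 4 * i.val
        · obtain ⟨R, h2, h3⟩ := reg_delta hτ U (i.val - 1)
          refine ⟨R, used_false (h3 i (by omega)) ?_⟩
          rw [h2]
          exact if_neg (by omega)
        · obtain ⟨R, h2, h3⟩ := reg_eps hτ U i
          exact ⟨R, used_false h3 (h2 t (by omega))⟩
      · obtain ⟨R, h1, h2, h3, h4⟩ := reg_beta hτ U i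
        refine ⟨R, used_false h4 ?_⟩
        rcases st with s | t | ⟨j, k⟩
        · exact h1 s
        · rw [h2]
          refine if_neg ?_
          rintro (h | h | h)
          · exact hb ⟨t, rfl, h⟩
          all_goals simp [joining, h] at hd
        · rw [h3]
          split_ifs with hj
          · subst hj
            fin_cases k
            · rfl
            · rfl
            · exact absurd rfl hg
          · rfl
    · -- `⊖_i`
      obtain ⟨R, h1, h2, h3, h4⟩ := reg_eta hτ U i
      refine ⟨R, used_false h4 ?_⟩
      rcases st with s | t | ⟨j, k⟩
      · exact h1 s
      · rw [h2]
        refine if_neg fun ht => ?_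
        simp [joining, ht] at hd
      · rw [h3]
        split_ifs with hj
        · subst hj
          fin_cases k
          · simp [joining] at hd
          · simp [joining] at hd
          · rfl
        · rfl
    · -- `⊕_i`
      obtain ⟨R, h1, h2, h3, h4⟩ := reg_theta hτ U i
      rcases st with ⟨j, s⟩ | t | ⟨j, k⟩
      · by_cases hj : j = i
        · subst hj
          obtain ⟨Q, hQ⟩ := hI
          obtain ⟨R', h5, h6⟩ := reg_init hτ U Q (fun j => (hQ j _).2 rfl)
          refine ⟨R', used_false (h6 j) ?_⟩
          rw [h5, ← Bool.not_eq_true, hQ]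
          intro hs
          simp [joining, hs] at hd
        · refine ⟨R, used_false h4 ?_⟩
          rw [h1]
          exact if_neg fun h => hj (Fin.ext h)
      · exact ⟨R, used_false h4 (h2 t)⟩
      · by_cases hj : j = i
        · subst hj
          obtain ⟨R', h5, h6, h7⟩ := reg_theta' hτ U j
          fin_cases k
          · exact ⟨R', used_false h7 h5⟩
          · exact ⟨R', used_false h7 h6⟩
          · simp [joining] at hd
        · refine ⟨R, used_false h4 ?_⟩
          rw [h3]
          exact if_neg hj

theorem sep_of {S' E' : Type} {A : TS S' E'} {R : Region τ A} {s s' : S'} {b : Bool}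
    (h : R.sup s = b) (h' : R.sup s' = !b) : ∃ R : Region τ A, R.sup s ≠ R.sup s' :=
  ⟨R, by rw [h, h']; cases b <;> decide⟩

theorem sep_symm {S' E' : Type} {A : TS S' E'} {s s' : S'}
    (h : ∃ R : Region τ A, R.sup s ≠ R.sup s') : ∃ R : Region τ A, R.sup s' ≠ R.sup s :=
  h.imp fun _ => Ne.symm

theorem bots_sep (hτ : Core τ) (U : Union (Fin n) S E) {t t' : Fin (4 * n + 1)} (h : t < t') :
    ∃ R : Region τ (joining U), R.sup (.inr (.inl t)) ≠ R.sup (.inr (.inl t')) := by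
  have hlt : t.val < t'.val := h
  have hn := t'.isLt
  by_cases hp : ∃ p, t.val < 4 * p + 2 ∧ 4 * p + 2 ≤ t'.val
  · obtain ⟨p, hp1, hp2⟩ := hp
    obtain ⟨R, h1, h2⟩ := reg_delta hτ U p
    exact sep_of (R := R) (b := false) (by rw [h1]; exact if_neg (by omega))
      (by rw [h1]; exact if_pos hp2)
  -- now no `4p + 2` lies in `(t, t']`, so `t'` is at most three steps away from `t`
  have hc : t'.val < 4 * ((t.val + 1) / 4) + 2 ∨ (t.val % 4 = 2 ∧ t'.val < t.val + 4) := by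
    by_contra hcon
    push Not at hcon
    rcases Nat.lt_or_ge t.val (4 * ((t.val + 1) / 4) + 2) with h1 | h1
    · exact hp ⟨_, h1, hcon.1⟩
    · exact hp ⟨(t.val + 1) / 4 + 1, by omega, by omega⟩
  by_cases h2 : t.val % 4 = 2
  · obtain ⟨R, -, h3, -, -⟩ := reg_eta hτ U ⟨t.val / 4, by omega⟩
    exact sep_of (R := R) (b := true) (by rw [h3]; exact if_pos (by dsimp only; omega))
      (by rw [h3]; exact if_neg (by dsimp only; omega))
  by_cases h4 : t.val % 4 = 3
  · obtain ⟨R, -, h3, -, -⟩ := reg_zeta hτ U ⟨t.val / 4, by omega⟩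
    exact sep_of (R := R) (b := true) (by rw [h3]; exact if_pos (by dsimp only; omega))
      (by rw [h3]; exact if_neg (by dsimp only; omega))
  · obtain ⟨R, -, h3, -, -⟩ := reg_zeta hτ U ⟨t.val / 4, by omega⟩
    exact sep_of (R := R) (b := false) (by rw [h3]; exact if_neg (by dsimp only; omega))
      (by rw [h3]; exact if_pos (by dsimp only; omega))

/-- The `τ`-SSP passes from a union to its joining. -/
theorem joining_ssp (hτ : Core τ) (U : Union (Fin n) S E) (hS : USSP τ U) :
    SSP τ (joining U) := by
  have hUq : ∀ s q, ∃ R : Region τ (joining U), R.sup (.inl s) ≠ R.sup (.inr q) := by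
    intro s q
    obtain ⟨R, h1, h2, h3⟩ := reg_union hτ U
    exact sep_of (h1 s) (h2 q)
  have hBT : ∀ t j k, ∃ R : Region τ (joining U),
      R.sup (.inr (.inl t)) ≠ R.sup (.inr (.inr (j, k))) := by
    intro t j k
    obtain ⟨R, h1, h2, h3, h4⟩ := reg_theta hτ U j
    exact sep_of (h2 t) (by rw [h3]; exact if_pos rfl)
  rintro (⟨i, s⟩ | t | ⟨i, k⟩) (⟨i', s'⟩ | t' | ⟨i', k'⟩) hne
  · by_cases hi : i = i'
    · subst hi
      obtain ⟨R, hR⟩ := hS i s s' (fun h => hne (by rw [h]))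
      obtain ⟨R', h1, h2⟩ := reg_ext hτ U R
      exact ⟨R', by rw [h1, h1]; exact hR⟩
    · obtain ⟨R, h1, h2, h3, h4⟩ := reg_theta hτ U i
      exact sep_of (R := R) (b := true) (by rw [h1]; exact if_pos rfl)
        (by rw [h1]; exact if_neg fun h => hi (Fin.ext h.symm))
  · exact hUq _ _
  · exact hUq _ _
  · exact sep_symm (hUq _ _)
  · rcases lt_trichotomy t t' with h | h | h
    · exact bots_sep hτ U h
    · exact absurd (by rw [h]) hne
    · exact sep_symm (bots_sep hτ U h)
  · exact hBT _ _ _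
  · exact sep_symm (hUq _ _)
  · exact sep_symm (hBT _ _ _)
  · by_cases hi : i = i'
    · subst hi
      obtain ⟨R, h1, h2, h3, h4⟩ := reg_zeta hτ U i
      obtain ⟨Q, g1, g2, g3, g4⟩ := reg_eta hτ U i
      by_cases hk : (![false, true, true] : Fin 3 → Bool) k = ![false, true, true] k'
      · refine ⟨Q, ?_⟩
        rw [g3, g3, if_pos rfl, if_pos rfl]
        fin_cases k <;> fin_cases k' <;> first | decide | exact absurd rfl hne |
          exact absurd hk (by decide)
      · refine ⟨R, ?_⟩
        rw [h3, h3, if_pos rfl, if_pos rfl]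
        exact hk
    · obtain ⟨R, h1, h2, h3, h4⟩ := reg_theta hτ U i
      exact sep_of (R := R) (b := true) (by rw [h3]; exact if_pos rfl)
        (by rw [h3]; exact if_neg fun h => hi h.symm)

end Feasibility

/-! ### The reduction -/

section Reduction

variable {V : Type} [DecidableEq V] {m : ℕ}

/-- Swaps the fresh events and leaves the support unchanged on all others. -/
def uSig : GEvent V m → Interaction
  | .u _ => .swap
  | _ => .nop

/-- The initial state of a gadget is attached to the rest by its fresh event only, so the initial
states form the support of a region. -/
theorem init_region {τ : Set Interaction} (hτ : Core τ) (X : Fin m → Fin 3 → V) :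
    ∃ R : URegion τ (gadget m X true),
      ∀ A s, R.sup ⟨A, s⟩ = true ↔ s = (gadget m X true A).init := by
  have hgood : ∀ A, solvable (fun t b => b == decide (t = (pat (kind A)).length))
      (isig X uSig A) = true := by
    intro A
    cases A <;> rfl
  choose f hf1 hf2 using fun A => solvable_sound (hgood A)
  refine ⟨⟨fun p => f p.1 (val p.1 p.2), uSig, ?_, ?_⟩, ?_⟩
  · intro e
    cases e <;> first | exact hτ.1 | exact hτ.2.2.1
  · intro A s e s' h
    exact chainDelta_edge (spec X A) uSig _ (hf2 A) (gadget_delta_some X A h)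
  · intro A s
    have h := hf1 A (val A s) (by simpa [isig, length_spec] using val_le A s)
    rw [beq_iff_eq] at h
    dsimp only
    rw [h, decide_eq_true_iff, ← val_init X A]
    exact ⟨val_inj A _ _, fun h => h ▸ rfl⟩

/-- A region of the union of gadgets, read over the numbered components. -/
noncomputable def reindex {τ : Set Interaction} {X : Fin m → Fin 3 → V}
    (R : URegion τ (gadget m X true)) : URegion τ (gadgetFin m X true) where
  sup := fun p => R.sup ⟨(Fintype.equivFin (GIdx m)).symm p.1, p.2⟩
  sig := R.sig
  sig_mem := R.sig_mem
  consistent := fun j => R.consistent ((Fintype.equivFin (GIdx m)).symm j)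

theorem joining_feasible {τ : Set Interaction} (hτ : Core τ) (X : Fin m → Fin 3 → V)
    (hS : USSP τ (gadget m X true)) (hE : UESSP τ (gadget m X true)) :
    Feasible τ (joining (gadgetFin m X true)) := by
  constructor
  · refine joining_ssp hτ _ fun j s s' hne => ?_
    obtain ⟨R, hR⟩ := hS _ s s' hne
    exact ⟨reindex R, hR⟩
  · refine joining_essp hτ _ (fun e j s hd => ?_) ?_
    · obtain ⟨R, hR⟩ := hE e _ s hd
      exact ⟨reindex R, hR⟩
    · obtain ⟨R, hR⟩ := init_region hτ X
      exact ⟨reindex R, fun j s => hR _ s⟩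

theorem model_of_uessp {τ : Set Interaction} (hm : 0 < m) (X : Fin m → Fin 3 → V)
    (hX : ∀ i, Function.Injective (X i)) (hE : UESSP τ (gadget m X true)) :
    ∃ M, OneInThree m X M := by
  obtain ⟨R, hR⟩ := hE .k (.H (hidx hm)) (2 : Fin 6) rfl
  exact model_of_region hm X hX R.sig
    (fun A => ⟨fun s => R.sup ⟨A, s⟩, R.consistent A⟩) _ (R.consistent _) hR

theorem model_of_joining {τ : Set Interaction} (hm : 0 < m) (X : Fin m → Fin 3 → V)
    (hX : ∀ i, Function.Injective (X i)) (hE : ESSP τ (joining (gadgetFin m X true))) :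
    ∃ M, OneInThree m X M := by
  have hidx' : ∀ A : GIdx m, ∃ j, (Fintype.equivFin (GIdx m)).symm j = A := fun A =>
    ⟨Fintype.equivFin (GIdx m) A, Equiv.symm_apply_apply _ _⟩
  -- a region of the joining restricts to every gadget
  have hres : ∀ R : Region τ (joining (gadgetFin m X true)), ∀ j s e s',
      (gadget m X true ((Fintype.equivFin (GIdx m)).symm j)).delta s e = some s' →
      (R.sig (.inl e)).apply (R.sup (.inl ⟨j, s⟩)) = some (R.sup (.inl ⟨j, s'⟩)) := by
    intro R j s e s' h
    refine R.consistent (.inl ⟨j, s⟩) (.inl e) (.inl ⟨j, s'⟩) ?_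
    simp only [joining, gadgetFin, h, Option.map_some]
  have hlift : ∀ A (s : GS m A), (gadget m X true A).delta s .k = none →
      ∃ (R : Region τ (joining (gadgetFin m X true))) (sup : GS m A → Bool),
        (∀ s e s', (gadget m X true A).delta s e = some s' →
          (R.sig (.inl e)).apply (sup s) = some (sup s')) ∧
        (R.sig (.inl .k)).apply (sup s) = none := by
    intro A
    obtain ⟨j, rfl⟩ := hidx' A
    intro s hs
    obtain ⟨R, hR⟩ := hE (.inl ⟨j, s⟩) (.inl .k) (by
      simp only [joining, gadgetFin, hs, Option.map_none])
    exact ⟨R, fun s => R.sup (.inl ⟨j, s⟩), hres R j, hR⟩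
  obtain ⟨R, sup, hsup, hinh⟩ := hlift (.H (hidx hm)) (2 : Fin 6) rfl
  refine model_of_region hm X hX (fun e => R.sig (.inl e)) (fun A => ?_) sup hsup hinh
  obtain ⟨j, rfl⟩ := hidx' A
  exact ⟨fun s => R.sup (.inl ⟨j, s⟩), hres R j⟩

end Reduction

/-- For every `τ ∈ σ2`: `φ` has a one-in-three model iff
`U^{σ2}_φ` has the `τ`-SSP and the `τ`-ESSP, and equivalently iff the joining
`A(U^{σ2}_φ)` is `τ`-feasible. -/
theorem sigma2_reduction_correct {V : Type} [Fintype V] [DecidableEq V]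
    (m : ℕ) (hm : 0 < m) (X : Fin m → Fin 3 → V) (hφ : Cubic m X)
    (τ : Set Interaction) (hτ : sigma2mem τ) :
    ((∃ M : Set V, OneInThree m X M) ↔
      (USSP τ (gadget m X true) ∧ UESSP τ (gadget m X true))) ∧
    ((∃ M : Set V, OneInThree m X M) ↔
      Feasible τ (joining (gadgetFin m X true))) := by
  have hc : Core τ := by
    obtain ⟨ω, -, rfl⟩ := hτ
    simp [Core]
  have hfwd : (∃ M : Set V, OneInThree m X M) →
      USSP τ (gadget m X true) ∧ UESSP τ (gadget m X true) := by
    rintro ⟨M, hM⟩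
    have hE := uessp_of_model hc X hφ.1 M hM
    exact ⟨ussp_of_uessp hc X hφ.1 hE, hE⟩
  exact ⟨⟨hfwd, fun h => model_of_uessp hm X hφ.1 h.2⟩,
    ⟨fun h => joining_feasible hc X (hfwd h).1 (hfwd h).2,
      fun h => model_of_joining hm X hφ.1 h.2⟩⟩

end PetriNets
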